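/- arXiv:math/0305411 — 2 statements merged into one kernel-verified Lean document; each statement's English description precedes it below -/
import Mathlib

section
/- If K ⊂ ℝ² is a symmetric convex polygon with more than 4 vertices, then for every real p ≥ 1 and every integer N ≥ 2 one has the strict inequalities 𝔼 U_{K, N+1}^p < 𝔼 U_{𝒫, N+1}^p and 𝔼 V_{K, N}^p < 𝔼 V_{𝒫, N}^p, where 𝒫 is a symmetric parallelogram (the image of [-1,1]² under an invertible linear map). -/
open MeasureTheory Set

noncomputable section

variable {E : Type*} [NormedAddCommGroup E] [InnerProductSpace ℝ E]

/-- A symmetric convex body: a compact convex set with nonempty interior with `K = -K`. -/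
def IsSymConvexBody (K : Set E) : Prop :=
  IsCompact K ∧ Convex ℝ K ∧ (interior K).Nonempty ∧ K = -K

/-- `momentU n N K p = 𝔼 U_{K,N}^p`, the `p`-th moment of the normalized volume of the
convex hull of `N` independent uniform random points in `K ⊆ ℝⁿ`. -/
def momentU (n N : ℕ) (K : Set (EuclideanSpace ℝ (Fin n))) (p : ℝ) : ℝ :=
  (∫ x : Fin N → EuclideanSpace ℝ (Fin n) in {x | ∀ i, x i ∈ K},
      ((volume (convexHull ℝ (Set.range x))).toReal / (volume K).toReal) ^ p) /
    (volume K).toReal ^ N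

/-- `momentV n N K p = 𝔼 V_{K,N}^p`, the `p`-th moment of the normalized volume of the
symmetric convex hull `conv{±x₁, …, ±x_N}` of `N` independent uniform random points
in `K ⊆ ℝⁿ`. -/
def momentV (n N : ℕ) (K : Set (EuclideanSpace ℝ (Fin n))) (p : ℝ) : ℝ :=
  (∫ x : Fin N → EuclideanSpace ℝ (Fin n) in {x | ∀ i, x i ∈ K},
      ((volume (convexHull ℝ (Set.range x ∪ -Set.range x))).toReal / (volume K).toReal) ^ p) /
    (volume K).toReal ^ N

/-!
Normalise the polygon by a linear map so that `(1, 1)` and `(1, -1)` are vertices and some vertex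
lies beyond the line `x = 1`. The shear along the vertical lines that fixes the strip `|x| ≤ 1` and
moves `(x, y)` to `(x, y + t (x - 1))` for `x ≥ 1`, and symmetrically for `x ≤ -1`, preserves area
and commutes with `x ↦ -x`. The points of a random sample move along vertical lines at constant
speed, so the area of their convex hull is a convex function of `t` (a shadow system), and hence so
is the moment. At the first positive and the first negative time at which one of `(1, ±1)` stops
being a vertex the sheared polygon is still convex, and it has fewer vertices. The larger of the two
moments there strictly exceeds the moment at time `0`: near a sample of collinear points on a line
through the origin the hull has almost no area at `t = 0` but a definite area at each `t ≠ 0`.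
Repeating this, the number of vertices drops until only a parallelogram is left, and all
parallelograms have the same moments.
-/

namespace PolygonMoment

open Filter Topology ProbabilityTheory
open scoped Pointwise ENNReal

section HullVolume

variable {V : Type*} [NormedAddCommGroup V] [NormedSpace ℝ V]

lemma isCompact_convexHull_range {J : Type*} [Finite J] (z : J → V) :
    IsCompact (convexHull ℝ (range z)) :=
  (finite_range z).isCompact_convexHull ℝ

variable [MeasurableSpace V] [BorelSpace V] [FiniteDimensional ℝ V]
  (μ : Measure V) [IsFiniteMeasureOnCompacts μ]

lemma upperSemicontinuous_measure_convexHull_range {J : Type*} [Finite J] :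
    UpperSemicontinuous fun z : J → V => μ (convexHull ℝ (range z)) := by
  have : ProperSpace V := FiniteDimensional.proper ℝ V
  intro z₀ m hm
  have hthick := tendsto_measure_cthickening_of_isCompact (μ := μ) (isCompact_convexHull_range z₀)
  obtain ⟨δ, hδm, hδ⟩ := ((hthick.mono_left nhdsWithin_le_nhds).eventually_lt_const hm).and
    (self_mem_nhdsWithin : Ioi (0 : ℝ) ∈ 𝓝[>] 0) |>.exists
  have hclose : ∀ᶠ z in 𝓝 z₀, ∀ j, dist (z j) (z₀ j) < δ := eventually_all.2 fun j =>
    (continuous_apply j).continuousAt.eventually (Metric.ball_mem_nhds (z₀ j) hδ)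
  filter_upwards [hclose] with z hz
  refine (measure_mono (convexHull_min ?_ ((convex_convexHull ℝ _).cthickening δ))).trans_lt hδm
  rintro _ ⟨j, rfl⟩
  exact Metric.mem_cthickening_of_dist_le _ (z₀ j) _ _
    (subset_convexHull ℝ _ (mem_range_self j)) (hz j).le

lemma measurable_measureReal_convexHull_range {J : Type*} [Finite J] :
    Measurable fun z : J → V => μ.real (convexHull ℝ (range z)) := by
  have : ProperSpace V := FiniteDimensional.proper ℝ V
  exact (upperSemicontinuous_measure_convexHull_range μ).measurable.ennreal_toReal

lemma tendsto_measureReal_convexHull_range_zero {J : Type*} [Finite J] {z : J → V}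
    (hz : μ (convexHull ℝ (range z)) = 0) :
    Tendsto (fun z' : J → V => μ.real (convexHull ℝ (range z'))) (𝓝 z) (𝓝 0) := by
  have : Tendsto (fun z' : J → V => μ (convexHull ℝ (range z'))) (𝓝 z) (𝓝 0) :=
    tendsto_order.2 ⟨fun _ h => absurd h not_lt_zero, fun m hm =>
      upperSemicontinuous_measure_convexHull_range μ z m (hz.trans_lt hm)⟩
  exact (ENNReal.tendsto_toReal ENNReal.zero_ne_top).comp this

end HullVolume

section ShadowSystem

lemma ediam_add_le {V : Type*} [SeminormedAddCommGroup V] (A B : Set V) :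
    Metric.ediam (A + B) ≤ Metric.ediam A + Metric.ediam B := by
  refine Metric.ediam_le ?_
  rintro _ ⟨a, ha, b, hb, rfl⟩ _ ⟨a', ha', b', hb', rfl⟩
  exact (edist_add_add_le a b a' b').trans
    (add_le_add (Metric.edist_le_ediam_of_mem ha ha') (Metric.edist_le_ediam_of_mem hb hb'))

lemma volume_eq_ediam_of_convex {A : Set ℝ} (hA : Convex ℝ A) : volume A = Metric.ediam A := by
  refine le_antisymm (Real.volume_le_diam A) (Metric.ediam_le fun x hx y hy => ?_)
  calc edist x y = volume (uIcc y x) := by rw [Real.volume_interval, edist_dist, Real.dist_eq]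
    _ ≤ volume A := measure_mono (segment_eq_uIcc y x ▸ hA.segment_subset hy hx)

lemma volume_le_of_subset_smul_add_smul {A B C : Set ℝ} (hA : Convex ℝ A) (hB : Convex ℝ B)
    {μ ν : ℝ} (hμ : 0 ≤ μ) (hν : 0 ≤ ν) (hC : C ⊆ μ • A + ν • B) :
    volume C ≤ ENNReal.ofReal μ * volume A + ENNReal.ofReal ν * volume B := by
  have hsmul {r : ℝ} (hr : 0 ≤ r) (D : Set ℝ) :
      Metric.ediam (r • D) = ENNReal.ofReal r * Metric.ediam D := by
    rw [ediam_smul₀, ENNReal.smul_def, smul_eq_mul, ← enorm_eq_nnnorm, Real.enorm_of_nonneg hr]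
  calc volume C ≤ Metric.ediam (μ • A + ν • B) :=
        (Real.volume_le_diam C).trans (Metric.ediam_mono hC)
    _ ≤ ENNReal.ofReal μ * volume A + ENNReal.ofReal ν * volume B := by
        rw [volume_eq_ediam_of_convex hA, volume_eq_ediam_of_convex hB, ← hsmul hμ, ← hsmul hν]
        exact ediam_add_le _ _

variable {V : Type*} [NormedAddCommGroup V] [NormedSpace ℝ V]

/-- The projection `(x, y, b) ↦ (x, y + t b)`. The images of a fixed convex body under these
projections form a shadow system: the point `(x, y, b)` is seen moving vertically with speed `b`. -/
def shadowMap (t : ℝ) : V × ℝ × ℝ →L[ℝ] V × ℝ :=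
  (ContinuousLinearMap.fst ℝ V (ℝ × ℝ)).prod
    ((ContinuousLinearMap.fst ℝ ℝ ℝ + t • ContinuousLinearMap.snd ℝ ℝ ℝ).comp
      (ContinuousLinearMap.snd ℝ V (ℝ × ℝ)))

lemma shadowMap_apply (t : ℝ) (q : V × ℝ × ℝ) : shadowMap t q = (q.1, q.2.1 + t * q.2.2) := rfl

lemma slice_shadowMap_subset (C : Set (V × ℝ × ℝ)) (x : V) (a b : ℝ) {μ ν : ℝ} (h : μ + ν = 1) :
    Prod.mk x ⁻¹' (shadowMap (μ * a + ν * b) '' C) ⊆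
      μ • (Prod.mk x ⁻¹' (shadowMap a '' C)) + ν • (Prod.mk x ⁻¹' (shadowMap b '' C)) := by
  rintro y ⟨⟨_, y₀, v⟩, hq, hqy⟩
  rw [shadowMap_apply] at hqy
  obtain ⟨rfl, rfl⟩ := Prod.mk.inj hqy
  refine ⟨μ • (y₀ + a * v), ⟨_, ⟨_, hq, rfl⟩, rfl⟩, ν • (y₀ + b * v), ⟨_, ⟨_, hq, rfl⟩, rfl⟩, ?_⟩
  simp only [smul_eq_mul]
  linear_combination y₀ * h

variable [MeasureSpace V] [BorelSpace V]

lemma volume_shadowMap_image_le {C : Set (V × ℝ × ℝ)} (hC : Convex ℝ C) (hC' : IsCompact C)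
    (a b : ℝ) {μ ν : ℝ} (hμ : 0 ≤ μ) (hν : 0 ≤ ν) (h : μ + ν = 1) :
    volume (shadowMap (μ * a + ν * b) '' C) ≤
      ENNReal.ofReal μ * volume (shadowMap a '' C) +
        ENNReal.ofReal ν * volume (shadowMap b '' C) := by
  have hmeas (t : ℝ) : MeasurableSet (shadowMap t '' C) :=
    (hC'.image (shadowMap t).continuous).measurableSet
  have hslice (t : ℝ) (x : V) : Convex ℝ (Prod.mk x ⁻¹' (shadowMap t '' C)) := by
    exact (hC.is_linear_image (shadowMap t).isLinear).affine_preimage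
      ((AffineMap.const ℝ ℝ x).prod (AffineMap.id ℝ ℝ))
  have hmeas_slice (t : ℝ) := measurable_measure_prodMk_left (ν := (volume : Measure ℝ)) (hmeas t)
  simp only [Measure.volume_eq_prod, Measure.prod_apply (hmeas _)]
  rw [← lintegral_const_mul _ (hmeas_slice a), ← lintegral_const_mul _ (hmeas_slice b),
    ← lintegral_add_left ((hmeas_slice a).const_mul _)]
  exact lintegral_mono fun x => volume_le_of_subset_smul_add_smul (hslice a x) (hslice b x) hμ hν
    (slice_shadowMap_subset C x a b h)

lemma convexOn_volume_shadowMap_image [IsFiniteMeasureOnCompacts (volume : Measure V)]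
    {C : Set (V × ℝ × ℝ)} (hC : Convex ℝ C) (hC' : IsCompact C) :
    ConvexOn ℝ univ fun t => volume.real (shadowMap t '' C) := by
  refine ⟨convex_univ, fun a _ b _ μ ν hμ hν h => ?_⟩
  have hfin (t : ℝ) : volume (shadowMap t '' C) ≠ ∞ :=
    (hC'.image (shadowMap t).continuous).measure_lt_top.ne
  have hle := volume_shadowMap_image_le hC hC' a b hμ hν h
  have hfin' (r t : ℝ) : ENNReal.ofReal r * volume (shadowMap t '' C) ≠ ∞ :=
    ENNReal.mul_ne_top ENNReal.ofReal_ne_top (hfin t)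
  have := ENNReal.toReal_mono (ENNReal.add_ne_top.2 ⟨hfin' μ a, hfin' ν b⟩) hle
  simpa only [ENNReal.toReal_add (hfin' μ a) (hfin' ν b), ENNReal.toReal_mul,
    ENNReal.toReal_ofReal hμ, ENNReal.toReal_ofReal hν, smul_eq_mul, measureReal_def] using this

end ShadowSystem

section VerticalShear

/-- The homeomorphism `(x, y) ↦ (x, y + f x)`. -/
def verticalShear {X : Type*} [TopologicalSpace X] (f : C(X, ℝ)) : X × ℝ ≃ₜ X × ℝ where
  toFun q := (q.1, q.2 + f q.1)
  invFun q := (q.1, q.2 - f q.1)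
  left_inv q := by simp
  right_inv q := by simp

lemma verticalShear_apply {X : Type*} [TopologicalSpace X] (f : C(X, ℝ)) (q : X × ℝ) :
    verticalShear f q = (q.1, q.2 + f q.1) := rfl

lemma measurePreserving_verticalShear {X : Type*} [TopologicalSpace X] [MeasureSpace X]
    [OpensMeasurableSpace X] [SFinite (volume : Measure X)] (f : C(X, ℝ)) :
    MeasurePreserving (verticalShear f) :=
  (MeasurePreserving.id volume).skew_product (g := fun x y => y + f x)
    (measurable_snd.add (f.continuous.measurable.comp measurable_fst))
    (ae_of_all _ fun x => (measurePreserving_add_right volume (f x)).map_eq)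

lemma verticalShear_zero {X : Type*} [TopologicalSpace X] :
    verticalShear (0 : C(X, ℝ)) = Homeomorph.refl _ := by
  ext q <;> simp [verticalShear_apply]

lemma verticalShear_symm {X : Type*} [TopologicalSpace X] (f : C(X, ℝ)) :
    (verticalShear f).symm = verticalShear (-f) := by
  ext q <;> simp [verticalShear, sub_eq_add_neg]

lemma verticalShear_neg {V : Type*} [TopologicalSpace V] [Neg V] {f : C(V, ℝ)}
    (hf : ∀ x, f (-x) = -f x) (q : V × ℝ) : verticalShear f (-q) = -verticalShear f q := by
  ext <;> simp [verticalShear_apply, hf, add_comm]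

variable {V : Type*} [NormedAddCommGroup V] [NormedSpace ℝ V] [MeasureSpace V] [BorelSpace V]
  [IsFiniteMeasureOnCompacts (volume : Measure V)]

-- The moving points are the projections of fixed points of `V × ℝ × ℝ`.
lemma convexOn_volume_convexHull_verticalShear {J : Type*} [Finite J] (f : C(V, ℝ))
    (z : J → V × ℝ) :
    ConvexOn ℝ univ fun t : ℝ =>
      volume.real (convexHull ℝ (range fun j => verticalShear (t • f) (z j))) := by
  let w (j : J) : V × ℝ × ℝ := ((z j).1, (z j).2, f (z j).1)
  have himage (t : ℝ) : shadowMap t '' convexHull ℝ (range w) =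
      convexHull ℝ (range fun j => verticalShear (t • f) (z j)) := by
    rw [← ContinuousLinearMap.coe_coe, LinearMap.image_convexHull, ← range_comp]
    rfl
  simpa only [himage] using
    convexOn_volume_shadowMap_image (convex_convexHull ℝ _) (isCompact_convexHull_range w)

end VerticalShear

section Moment

variable {ι J : Type*} {s : J → ι × ℤˣ}

/-- The points `± x i` obtained from a family `x`, one for each index and sign listed by `s`. The
pattern `i ↦ (i, 1)` gives the family itself; the identity of `ι × ℤˣ` gives its symmetrisation. -/
def signedPoints {V : Type*} [AddGroup V] (s : J → ι × ℤˣ) (x : ι → V) (j : J) : V :=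
  (((s j).2 : ℤˣ) : ℤ) • x (s j).1

lemma signedPoints_mem {V : Type*} [AddGroup V] {K : Set V} (hK : ∀ x ∈ K, -x ∈ K)
    {x : ι → V} (hx : ∀ i, x i ∈ K) (j : J) : signedPoints s x j ∈ K := by
  rw [signedPoints]
  rcases Int.units_eq_one_or (s j).2 with h | h <;> simp [h, hx, hK]

lemma signedPoints_comp {V W : Type*} [AddGroup V] [AddGroup W] {f : V → W}
    (hf : ∀ x, f (-x) = -f x) (x : ι → V) :
    signedPoints s (f ∘ x) = f ∘ signedPoints s x := by
  ext j
  rcases Int.units_eq_one_or (s j).2 with h | h <;> simp [signedPoints, h, hf]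

lemma continuous_signedPoints {V : Type*} [AddGroup V] [TopologicalSpace V]
    [IsTopologicalAddGroup V] : Continuous (signedPoints s : (ι → V) → J → V) := by
  unfold signedPoints
  fun_prop

section

variable {V : Type*} [AddCommGroup V] [Module ℝ V] [MeasureSpace V]

/-- The volume of the convex hull of the points `± x i` listed by the pattern `s`. -/
def hullVolume (s : J → ι × ℤˣ) (x : ι → V) : ℝ :=
  volume.real (convexHull ℝ (range (signedPoints s x)))

variable [Fintype ι]

/-- The `p`-th moment of the normalised volume of the convex hull of the points `± x i` listed by
`s`, for independent uniform points `x i` of `K`. It covers `𝔼 U_{K,N}^p` and `𝔼 V_{K,N}^p`. -/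
def hullMoment (s : J → ι × ℤˣ) (p : ℝ) (K : Set V) : ℝ :=
  ∫ x, (hullVolume s x / volume.real K) ^ p ∂Measure.pi fun _ : ι => volume[|K]

lemma pi_cond_eq_smul_restrict {Ω : Type*} [MeasurableSpace Ω] (μ : Measure Ω) [SigmaFinite μ]
    (K : Set Ω) : Measure.pi (fun _ : ι => μ[|K]) =
      (μ K)⁻¹ ^ Fintype.card ι • (Measure.pi fun _ : ι => μ).restrict {x | ∀ i, x i ∈ K} := by
  have hset : {x : ι → Ω | ∀ i, x i ∈ K} = univ.pi fun _ => K := by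
    ext
    simp
  refine Measure.pi_eq fun t _ => ?_
  rw [hset, Measure.restrict_pi_pi, Measure.smul_apply, Measure.pi_pi]
  simp [ProbabilityTheory.cond, Finset.prod_mul_distrib]

lemma hullMoment_eq_setIntegral [SigmaFinite (volume : Measure V)] (s : J → ι × ℤˣ) (p : ℝ)
    (K : Set V) : hullMoment s p K =
      (∫ x in {x : ι → V | ∀ i, x i ∈ K}, (hullVolume s x / volume.real K) ^ p) /
        volume.real K ^ Fintype.card ι := by
  rw [hullMoment, pi_cond_eq_smul_restrict, integral_smul_measure, ← volume_pi, ENNReal.toReal_pow,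
    ENNReal.toReal_inv, smul_eq_mul, inv_pow, inv_mul_eq_div, measureReal_def]

end

lemma momentU_eq_hullMoment (n N : ℕ) (K : Set (EuclideanSpace ℝ (Fin n))) (p : ℝ) :
    momentU n N K p = hullMoment (fun i : Fin N => (i, 1)) p K := by
  have hpoints (x : Fin N → EuclideanSpace ℝ (Fin n)) :
      signedPoints (fun i => (i, 1)) x = x := by
    ext1 i
    simp [signedPoints]
  simp only [hullMoment_eq_setIntegral, momentU, hullVolume, hpoints, measureReal_def,
    Fintype.card_fin]

lemma momentV_eq_hullMoment (n N : ℕ) (K : Set (EuclideanSpace ℝ (Fin n))) (p : ℝ) :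
    momentV n N K p = hullMoment (id : Fin N × ℤˣ → Fin N × ℤˣ) p K := by
  have hpoints (x : Fin N → EuclideanSpace ℝ (Fin n)) :
      range (signedPoints id x) = range x ∪ -range x := by
    ext y
    constructor
    · rintro ⟨⟨i, u⟩, rfl⟩
      rcases Int.units_eq_one_or u with rfl | rfl
      exacts [.inl ⟨i, by simp [signedPoints]⟩, .inr ⟨i, by simp [signedPoints]⟩]
    · rintro (⟨i, rfl⟩ | ⟨i, hi⟩)
      exacts [⟨(i, 1), by simp [signedPoints]⟩, ⟨(i, -1), by simp [signedPoints, hi]⟩]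
  simp only [hullMoment_eq_setIntegral, momentV, hullVolume, hpoints, measureReal_def,
    Fintype.card_fin]

section Transport

lemma measure_eq_mul_measure_image {Ω Ω' : Type*} [MeasurableSpace Ω] [MeasurableSpace Ω']
    {μ : Measure Ω} {ν : Measure Ω'} (f : Ω ≃ᵐ Ω') {c : ℝ≥0∞} (hf : μ.map f = c • ν) (A : Set Ω) :
    μ A = c * ν (f '' A) := by
  rw [← smul_eq_mul, ← Measure.smul_apply, ← hf, f.map_apply, preimage_image_eq _ f.injective]

lemma measurePreserving_cond {Ω Ω' : Type*} [MeasurableSpace Ω] [MeasurableSpace Ω']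
    {μ : Measure Ω} {ν : Measure Ω'} (f : Ω ≃ᵐ Ω') {c : ℝ≥0∞} (hc : c ≠ 0) (hc' : c ≠ ∞)
    (hf : μ.map f = c • ν) (K : Set Ω) : MeasurePreserving f (μ[|K]) (ν[|f '' K]) := by
  have hrestrict : (μ.restrict K).map f = c • ν.restrict (f '' K) := by
    rw [← Measure.restrict_smul, ← hf, f.restrict_map, preimage_image_eq _ f.injective]
  refine ⟨f.measurable, ?_⟩
  rw [ProbabilityTheory.cond, ProbabilityTheory.cond, Measure.map_smul, hrestrict,
    measure_eq_mul_measure_image f hf, smul_smul, ENNReal.mul_inv (.inl hc) (.inl hc'),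
    mul_right_comm, ENNReal.inv_mul_cancel hc hc', one_mul]

lemma hullMoment_image [Fintype ι] {V W : Type*} [MeasureSpace V] [AddCommGroup W] [Module ℝ W]
    [MeasureSpace W] (f : V ≃ᵐ W) {c : ℝ≥0∞} (hc : c ≠ 0) (hc' : c ≠ ∞)
    (hf : (volume : Measure V).map f = c • volume) (s : J → ι × ℤˣ) (p : ℝ) (K : Set V) :
    hullMoment s p (f '' K) =
      ∫ x, (hullVolume s (f ∘ x) / volume.real (f '' K)) ^ p
        ∂Measure.pi fun _ : ι => volume[|K] :=
  ((measurePreserving_pi _ _ fun _ : ι => measurePreserving_cond f hc hc' hf K).integral_comp'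
    (f := MeasurableEquiv.piCongrRight fun _ => f)
    fun x => (hullVolume s x / volume.real (f '' K)) ^ p).symm

end Transport

section LinearInvariance

variable {V W : Type*}
  [NormedAddCommGroup V] [NormedSpace ℝ V] [MeasureSpace V] [BorelSpace V] [FiniteDimensional ℝ V]
  [(volume : Measure V).IsAddHaarMeasure]
  [NormedAddCommGroup W] [NormedSpace ℝ W] [MeasureSpace W] [BorelSpace W]
  [(volume : Measure W).IsAddHaarMeasure]

lemma exists_map_volume_eq_smul (e : V ≃L[ℝ] W) :
    ∃ c : ℝ≥0∞, c ≠ 0 ∧ c ≠ ∞ ∧ (volume : Measure V).map e = c • volume := by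
  have : FiniteDimensional ℝ W := e.toLinearEquiv.finiteDimensional
  have := e.isAddHaarMeasure_map (volume : Measure V)
  refine ⟨Measure.addHaarScalarFactor (Measure.map e volume) (volume : Measure W), ?_,
    ENNReal.coe_ne_top, Measure.isAddLeftInvariant_eq_smul _ _⟩
  exact_mod_cast (Measure.addHaarScalarFactor_pos_of_isAddHaarMeasure _ _).ne'

theorem hullMoment_continuousLinearEquiv_image [Fintype ι] (e : V ≃L[ℝ] W) (s : J → ι × ℤˣ)
    (p : ℝ) (K : Set V) : hullMoment s p (e '' K) = hullMoment s p K := by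
  obtain ⟨c, hc, hc', hvol⟩ := exists_map_volume_eq_smul e
  let f : V ≃ᵐ W := e.toHomeomorph.toMeasurableEquiv
  have hscale (A : Set V) : volume.real A = c.toReal * volume.real (f '' A) := by
    rw [measureReal_def, measure_eq_mul_measure_image f hvol, ENNReal.toReal_mul, measureReal_def]
  have hhull (x : ι → V) : hullVolume s x = c.toReal * hullVolume s (f ∘ x) := by
    have himage : f '' convexHull ℝ (range (signedPoints s x)) =
        convexHull ℝ (range (signedPoints s (f ∘ x))) := by
      rw [signedPoints_comp (f := f) fun x => map_neg e x, range_comp]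
      exact e.toLinearMap.image_convexHull _
    rw [hullVolume, hscale, himage, hullVolume]
  have hc₀ : c.toReal ≠ 0 := ENNReal.toReal_ne_zero.2 ⟨hc, hc'⟩
  refine (hullMoment_image f hc hc' hvol s p K).trans ?_
  simp only [hullMoment, hhull, hscale K, mul_div_mul_left _ _ hc₀]

end LinearInvariance

end Moment

section Triangle

/-- The determinant of the pair of plane vectors `v`, `w`. -/
def cross (v w : ℝ × ℝ) : ℝ := v.1 * w.2 - v.2 * w.1

lemma continuous_cross : Continuous fun q : (ℝ × ℝ) × ℝ × ℝ => cross q.1 q.2 := by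
  unfold cross
  fun_prop

/-- The linear map of the plane sending the standard basis to `v`, `w`. -/
def pairMap (v w : ℝ × ℝ) : ℝ × ℝ →ₗ[ℝ] ℝ × ℝ :=
  (LinearMap.fst ℝ ℝ ℝ).smulRight v + (LinearMap.snd ℝ ℝ ℝ).smulRight w

lemma pairMap_apply (v w q : ℝ × ℝ) : pairMap v w q = q.1 • v + q.2 • w := rfl

lemma det_pairMap (v w : ℝ × ℝ) : LinearMap.det (pairMap v w) = cross v w := by
  rw [← LinearMap.det_toMatrix (Module.Basis.finTwoProd ℝ), Matrix.det_fin_two]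
  simp [LinearMap.toMatrix_apply, pairMap_apply, cross, mul_comm]

lemma abs_cross_div_four_le_volume {C : Set (ℝ × ℝ)} (hC : Convex ℝ C) (hC' : volume C ≠ ∞)
    {u v w : ℝ × ℝ} (hu : u ∈ C) (hv : v ∈ C) (hw : w ∈ C) :
    |cross (v - u) (w - u)| / 4 ≤ volume.real C := by
  let Q : Set (ℝ × ℝ) := Icc 0 (1 / 2) ×ˢ Icc 0 (1 / 2)
  have hQ : volume Q = ENNReal.ofReal (1 / 4) := by
    rw [Measure.volume_eq_prod, Measure.prod_prod, Real.volume_Icc,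
      ← ENNReal.ofReal_mul (by norm_num)]
    norm_num
  have hsub : pairMap (v - u) (w - u) '' Q ⊆ (u + ·) ⁻¹' C := by
    rintro _ ⟨⟨α, β⟩, ⟨hα, hβ⟩, rfl⟩
    have hαv : u + (2 * α) • (v - u) ∈ C :=
      hC.add_smul_sub_mem hu hv ⟨by linarith [hα.1], by linarith [hα.2]⟩
    have hβw : u + (2 * β) • (w - u) ∈ C :=
      hC.add_smul_sub_mem hu hw ⟨by linarith [hβ.1], by linarith [hβ.2]⟩
    have hmid := hC.midpoint_mem hαv hβw
    rw [midpoint_eq_smul_add, invOf_eq_inv] at hmid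
    rw [mem_preimage, pairMap_apply]
    convert hmid using 1
    module
  have hvol := measure_mono (μ := volume) hsub
  rw [Measure.addHaar_image_linearMap, det_pairMap, hQ, measure_preimage_add,
    ← ENNReal.ofReal_mul (abs_nonneg _), ENNReal.ofReal_le_iff_le_toReal hC'] at hvol
  rwa [div_eq_mul_one_div]

end Triangle

section Pattern

variable {ι J : Type*} {s : J → ι × ℤˣ}

/-- The pattern `s` lists two different signed points and a third one independent of both. -/
def HasTriangle (s : J → ι × ℤˣ) : Prop :=
  ∃ j₁ j₂ j₃, s j₁ ≠ s j₂ ∧ (s j₃).1 ≠ (s j₁).1 ∧ (s j₃).1 ≠ (s j₂).1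

lemma hasTriangle_points {N : ℕ} (hN : 2 ≤ N) :
    HasTriangle fun i : Fin (N + 1) => (i, (1 : ℤˣ)) := by
  refine ⟨⟨0, by omega⟩, ⟨1, by omega⟩, ⟨2, by omega⟩, ?_⟩
  simp

lemma hasTriangle_symmetrized {N : ℕ} (hN : 2 ≤ N) :
    HasTriangle (id : Fin N × ℤˣ → Fin N × ℤˣ) := by
  refine ⟨(⟨0, by omega⟩, 1), (⟨0, by omega⟩, -1), (⟨1, by omega⟩, 1), ?_⟩
  simp [Units.ext_iff]

lemma HasTriangle.exists_coeff (hs : HasTriangle s) {κ r : ℝ} (hκ : |κ| < 1) (hr : |r| < 1) :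
    ∃ c : ι → ℝ, (∀ i, |c i| < 1) ∧ ∃ j₁ j₂ j₃, signedPoints s c j₁ = κ ∧
      signedPoints s c j₂ = -κ ∧ signedPoints s c j₃ = r := by
  classical
  obtain ⟨j₁, j₂, j₃, h₁₂, h₃₁, h₃₂⟩ := hs
  have hsign (u : ℤˣ) : (((u : ℤ) : ℝ) = 1 ∨ ((u : ℤ) : ℝ) = -1) := by
    rcases Int.units_eq_one_or u with rfl | rfl <;> simp
  have habs (u : ℤˣ) (y : ℝ) : |((u : ℤ) : ℝ) * y| = |y| := by
    rcases hsign u with h | h <;> simp [h]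
  have hsq (u : ℤˣ) (y : ℝ) : ((u : ℤ) : ℝ) * (((u : ℤ) : ℝ) * y) = y := by
    rcases hsign u with h | h <;> simp [h]
  let c (i : ι) : ℝ := if i = (s j₃).1 then ((s j₃).2 : ℤ) * r
    else if i = (s j₁).1 then ((s j₁).2 : ℤ) * κ else ((s j₂).2 : ℤ) * -κ
  refine ⟨c, fun i => ?_, j₁, j₂, j₃, ?_, ?_, ?_⟩
  · simp only [c]
    split_ifs <;> simpa only [habs, abs_neg]
  · simp [signedPoints, c, h₃₁.symm, hsq]
  · by_cases h : (s j₂).1 = (s j₁).1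
    · have hu : (s j₁).2 = -(s j₂).2 := by
        rw [← Int.units_ne_iff_eq_neg]
        exact fun hu => h₁₂ (Prod.ext h.symm hu)
      simp [signedPoints, c, h, h₃₁.symm, hu, hsq]
    · simp [signedPoints, c, h₃₂.symm, h, hsq]
  · simp [signedPoints, c, hsq]

end Pattern

section StrictConvexity

variable {ι J : Type*} {s : J → ι × ℤˣ}

lemma integral_lt_integral_of_le_of_measure_pos {Ω : Type*} [MeasurableSpace Ω] {μ : Measure Ω}
    {f g : Ω → ℝ} (hf : Integrable f μ) (hg : Integrable g μ) (hle : f ≤ g)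
    (hlt : 0 < μ {x | f x < g x}) : ∫ x, f x ∂μ < ∫ x, g x ∂μ := by
  rw [← sub_pos, ← integral_sub hg hf,
    integral_pos_iff_support_of_nonneg (fun x => sub_nonneg.2 (hle x)) (hg.sub hf)]
  exact hlt.trans_le (measure_mono fun x hx => (sub_pos.2 hx).ne')

lemma integral_rpow_lt_max {Ω : Type*} [MeasurableSpace Ω] {P : Measure Ω} {g₀ g₁ g₂ : Ω → ℝ}
    {p : ℝ} (hp : 1 ≤ p) (hg₀ : 0 ≤ g₀) (hg₁ : 0 ≤ g₁) (hg₂ : 0 ≤ g₂)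
    (hint₀ : Integrable (fun x => g₀ x ^ p) P) (hint₁ : Integrable (fun x => g₁ x ^ p) P)
    (hint₂ : Integrable (fun x => g₂ x ^ p) P) {μ ν : ℝ} (hμ : 0 ≤ μ) (hν : 0 ≤ ν)
    (hμν : μ + ν = 1) (hle : ∀ x, g₀ x ≤ μ * g₁ x + ν * g₂ x)
    (hlt : 0 < P {x | g₀ x < μ * g₁ x + ν * g₂ x}) :
    ∫ x, g₀ x ^ p ∂P < max (∫ x, g₁ x ^ p ∂P) (∫ x, g₂ x ^ p ∂P) := by
  have hp₀ : 0 < p := by linarith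
  have hpow (x : Ω) : (μ * g₁ x + ν * g₂ x) ^ p ≤ μ * g₁ x ^ p + ν * g₂ x ^ p :=
    (convexOn_rpow hp).2 (hg₁ x) (hg₂ x) hμ hν hμν
  calc ∫ x, g₀ x ^ p ∂P < ∫ x, (μ * g₁ x ^ p + ν * g₂ x ^ p) ∂P :=
        integral_lt_integral_of_le_of_measure_pos hint₀
          ((hint₁.const_mul μ).add (hint₂.const_mul ν))
          (fun x => (Real.rpow_le_rpow (hg₀ x) (hle x) hp₀.le).trans (hpow x))
          (hlt.trans_le (measure_mono fun x hx =>
            (Real.rpow_lt_rpow (hg₀ x) hx hp₀).trans_le (hpow x)))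
    _ = μ * ∫ x, g₁ x ^ p ∂P + ν * ∫ x, g₂ x ^ p ∂P := by
        rw [integral_add (hint₁.const_mul μ) (hint₂.const_mul ν), integral_const_mul,
          integral_const_mul]
    _ ≤ max (∫ x, g₁ x ^ p ∂P) (∫ x, g₂ x ^ p ∂P) := Convex.combo_le_max _ _ hμ hν hμν

lemma measure_pi_cond_pos_of_mem_nhds [Fintype ι] {X : Type*} [TopologicalSpace X]
    [MeasurableSpace X] {μ : Measure X} [SigmaFinite μ] [μ.IsOpenPosMeasure] {K : Set X}
    (hK : μ K ≠ ∞) {x : ι → X} (hx : ∀ i, x i ∈ interior K) {U : Set (ι → X)} (hU : U ∈ 𝓝 x) :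
    0 < Measure.pi (fun _ : ι => μ[|K]) U := by
  have hbox : ∀ᶠ y in 𝓝 x, ∀ i, y i ∈ K := eventually_all.2 fun i =>
    (continuous_apply i).continuousAt.eventually (mem_interior_iff_mem_nhds.1 (hx i))
  rw [pi_cond_eq_smul_restrict, Measure.smul_apply, smul_eq_mul]
  refine ENNReal.mul_pos (pow_ne_zero _ (ENNReal.inv_ne_zero.2 hK)) ?_
  exact ((Measure.measure_pos_of_mem_nhds _ (inter_mem hU hbox)).trans_le
    (Measure.le_restrict_apply _ _)).ne'

lemma ae_pi_cond_mem [Fintype ι] {Ω : Type*} [MeasurableSpace Ω] {μ : Measure Ω} {K : Set Ω}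
    (hK : MeasurableSet K) : ∀ᵐ x ∂Measure.pi (fun _ : ι => μ[|K]), ∀ i, x i ∈ K :=
  eventually_all.2 fun i => (Measure.quasiMeasurePreserving_eval _ i).ae (ae_cond_mem hK)

section

variable {V : Type*} [NormedAddCommGroup V] [NormedSpace ℝ V]

lemma smul_mem_interior_of_abs_lt_one {K : Set V} (hK : Convex ℝ K) (hsymm : ∀ x ∈ K, -x ∈ K)
    (hint : (interior K).Nonempty) {z : V} (hz : z ∈ K) {c : ℝ} (hc : |c| < 1) :
    c • z ∈ interior K := by
  obtain ⟨y, hy⟩ := hint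
  have hzero : (0 : V) ∈ interior K := by
    have := hK.combo_interior_self_mem_interior hy (hsymm y (interior_subset hy))
      (a := 1 / 2) (b := 1 / 2) (by norm_num) (by norm_num) (by norm_num)
    simpa using this
  have habs {w : V} (hw : w ∈ K) : |c| • w ∈ interior K := by
    simpa using hK.combo_interior_self_mem_interior hzero hw (sub_pos.2 hc) (abs_nonneg c)
      (by ring)
  rcases abs_cases c with ⟨h, -⟩ | ⟨h, -⟩
  · simpa [h] using habs hz
  · simpa [h] using habs (hsymm z hz)

variable [MeasureSpace V] [IsFiniteMeasureOnCompacts (volume : Measure V)]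

lemma hullVolume_le_volume {K : Set V} (hK : Convex ℝ K) (hK' : IsCompact K)
    (hsymm : ∀ x ∈ K, -x ∈ K) {x : ι → V} (hx : ∀ i, x i ∈ K) :
    hullVolume s x ≤ volume.real K :=
  measureReal_mono (convexHull_min (range_subset_iff.2 (signedPoints_mem hsymm hx)) hK)
    hK'.measure_lt_top.ne

variable [BorelSpace V] [FiniteDimensional ℝ V] [Finite J]

lemma measurable_hullVolume [Finite ι] : Measurable (hullVolume s : (ι → V) → ℝ) := by
  have : ProperSpace V := FiniteDimensional.proper ℝ V
  exact (measurable_measureReal_convexHull_range volume).comp continuous_signedPoints.measurable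

lemma integrable_hullVolume_div_rpow [Fintype ι] {K : Set V} (hK : Convex ℝ K) (hK' : IsCompact K)
    (hsymm : ∀ x ∈ K, -x ∈ K) {p : ℝ} (hp : 0 ≤ p) :
    Integrable (fun x => (hullVolume s x / volume.real K) ^ p)
      (Measure.pi fun _ : ι => volume[|K]) := by
  refine Integrable.of_bound
    ((measurable_hullVolume.div_const _).pow_const p).aestronglyMeasurable 1 ?_
  filter_upwards [ae_pi_cond_mem hK'.measurableSet] with x hx
  have hnonneg : 0 ≤ hullVolume s x / volume.real K := by unfold hullVolume; positivity
  rw [Real.norm_of_nonneg (by positivity)]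
  exact Real.rpow_le_one hnonneg
    (div_le_one_of_le₀ (hullVolume_le_volume hK hK' hsymm hx) measureReal_nonneg) hp

end

section Shear

variable {V : Type*} [NormedAddCommGroup V] [NormedSpace ℝ V] [MeasureSpace V] [BorelSpace V]
  [IsFiniteMeasureOnCompacts (volume : Measure V)] {f : C(V, ℝ)}

lemma convexOn_hullVolume_verticalShear [Finite J] (hf : ∀ x, f (-x) = -f x) (x : ι → V × ℝ) :
    ConvexOn ℝ univ fun t : ℝ => hullVolume s (verticalShear (t • f) ∘ x) := by
  have hodd (t : ℝ) (y : V) : (t • f) (-y) = -(t • f) y := by simp [hf]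
  simp only [hullVolume, signedPoints_comp (verticalShear_neg (hodd _))]
  exact convexOn_volume_convexHull_verticalShear f (signedPoints s x)

lemma hullVolume_le_combo_verticalShear [Finite J] (hf : ∀ x, f (-x) = -f x) (x : ι → V × ℝ)
    {a b : ℝ} (ha : a < 0) (hb : 0 < b) :
    hullVolume s x ≤ b / (b - a) * hullVolume s (verticalShear (a • f) ∘ x) +
      -a / (b - a) * hullVolume s (verticalShear (b • f) ∘ x) := by
  have hab : 0 < b - a := by linarith
  have hzero : b / (b - a) * a + -a / (b - a) * b = 0 := by field_simp; ring
  have hμ : 0 ≤ b / (b - a) := by positivity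
  have hν : 0 ≤ -a / (b - a) := div_nonneg (by linarith) hab.le
  have h := (convexOn_hullVolume_verticalShear (s := s) hf x).2 (mem_univ a) (mem_univ b) hμ hν
    (by field_simp; ring)
  simp only [smul_eq_mul, hzero] at h
  simpa [verticalShear_zero] using h

variable [FiniteDimensional ℝ V]

lemma volume_verticalShear_image (f : C(V, ℝ)) (K : Set (V × ℝ)) :
    volume.real (verticalShear f '' K) = volume.real K := by
  have h := (measurePreserving_verticalShear f).measure_preimage_emb
    (verticalShear f).measurableEmbedding (verticalShear f '' K)
  rw [preimage_image_eq _ (verticalShear f).injective] at h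
  rw [measureReal_def, ← h, measureReal_def]

lemma hullMoment_verticalShear_image [Fintype ι] (f : C(V, ℝ)) (s : J → ι × ℤˣ) (p : ℝ)
    (K : Set (V × ℝ)) :
    hullMoment s p (verticalShear f '' K) =
      ∫ x, (hullVolume s (verticalShear f ∘ x) / volume.real K) ^ p
        ∂Measure.pi fun _ : ι => volume[|K] := by
  rw [← volume_verticalShear_image f K]
  exact hullMoment_image (verticalShear f).toMeasurableEquiv one_ne_zero ENNReal.one_ne_top
    ((measurePreserving_verticalShear f).map_eq.trans (one_smul _ _).symm) s p K

lemma integrable_hullVolume_verticalShear_div_rpow [Fintype ι] [Finite J]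
    (hf : ∀ x, f (-x) = -f x) {K : Set (V × ℝ)} (hK : IsCompact K) (hsymm : ∀ x ∈ K, -x ∈ K)
    (hconv : Convex ℝ (verticalShear f '' K)) {p : ℝ} (hp : 0 ≤ p) :
    Integrable (fun x => (hullVolume s (verticalShear f ∘ x) / volume.real K) ^ p)
      (Measure.pi fun _ : ι => volume[|K]) := by
  have hsymm' : ∀ y ∈ verticalShear f '' K, -y ∈ verticalShear f '' K := by
    rintro _ ⟨x, hx, rfl⟩
    exact ⟨-x, hsymm x hx, verticalShear_neg hf x⟩
  have hpreserving := measurePreserving_pi _ _ fun _ : ι => measurePreserving_cond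
    (verticalShear f).toMeasurableEquiv one_ne_zero ENNReal.one_ne_top
    ((measurePreserving_verticalShear f).map_eq.trans (one_smul _ _).symm) K
  have := hpreserving.integrable_comp_of_integrable (integrable_hullVolume_div_rpow (s := s) hconv
    (hK.image (verticalShear f).continuous) hsymm' hp)
  rwa [volume_verticalShear_image] at this

lemma hullMoment_lt_max_of_eventually_lt [Fintype ι] [Finite J]
    [(volume : Measure V).IsOpenPosMeasure] (hf : ∀ x, f (-x) = -f x) {K : Set (V × ℝ)}
    (hK : Convex ℝ K) (hK' : IsCompact K) (hint : (interior K).Nonempty)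
    (hsymm : ∀ x ∈ K, -x ∈ K) {a b : ℝ} (ha : a < 0) (hb : 0 < b)
    (hKa : Convex ℝ (verticalShear (a • f) '' K)) (hKb : Convex ℝ (verticalShear (b • f) '' K))
    {x₀ : ι → V × ℝ} (hx₀ : ∀ i, x₀ i ∈ interior K)
    (hlt : ∀ᶠ x in 𝓝 x₀,
      hullVolume s x < b / (b - a) * hullVolume s (verticalShear (a • f) ∘ x))
    {p : ℝ} (hp : 1 ≤ p) :
    hullMoment s p K < max (hullMoment s p (verticalShear (a • f) '' K))
      (hullMoment s p (verticalShear (b • f) '' K)) := by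
  have hodd (t : ℝ) (y : V) : (t • f) (-y) = -(t • f) y := by simp [hf]
  have hp₀ : 0 ≤ p := by linarith
  have hab : 0 < b - a := by linarith
  have hν : 0 ≤ -a / (b - a) := div_nonneg (by linarith) hab.le
  have hvol : 0 < volume.real K :=
    ENNReal.toReal_pos (Measure.measure_pos_of_nonempty_interior _ hint).ne' hK'.measure_lt_top.ne
  have hnonneg (x : ι → V × ℝ) : 0 ≤ hullVolume s x / volume.real K :=
    div_nonneg measureReal_nonneg measureReal_nonneg
  rw [hullMoment_verticalShear_image, hullMoment_verticalShear_image]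
  refine integral_rpow_lt_max hp hnonneg (fun x => hnonneg _) (fun x => hnonneg _)
    (integrable_hullVolume_div_rpow hK hK' hsymm hp₀)
    (integrable_hullVolume_verticalShear_div_rpow (hodd a) hK' hsymm hKa hp₀)
    (integrable_hullVolume_verticalShear_div_rpow (hodd b) hK' hsymm hKb hp₀)
    (μ := b / (b - a)) (ν := -a / (b - a)) (by positivity) hν (by field_simp; ring)
    (fun x => ?_) (measure_pi_cond_pos_of_mem_nhds hK'.measure_lt_top.ne hx₀ ?_)
  · simp only [← mul_div_assoc, ← add_div]
    gcongr
    exact hullVolume_le_combo_verticalShear hf x ha hb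
  · filter_upwards [hlt] with x hx
    simp only [← mul_div_assoc, ← add_div]
    gcongr
    exact hx.trans_le (le_add_of_nonneg_right (mul_nonneg hν measureReal_nonneg))

end Shear

end StrictConvexity

section NearlyCollinear

variable {ι J : Type*} [Finite J] {s : J → ι × ℤˣ}

lemma tendsto_hullVolume_zero_of_collinear (c : ι → ℝ) (z : ℝ × ℝ) :
    Tendsto (hullVolume s) (𝓝 fun i => c i • z) (𝓝 0) := by
  have hsub : convexHull ℝ (range (signedPoints s fun i => c i • z)) ⊆
      (Submodule.span ℝ {z} : Set (ℝ × ℝ)) := by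
    refine convexHull_min (range_subset_iff.2 fun j => ?_) (Submodule.convex _)
    exact zsmul_mem (Submodule.smul_mem _ _ (Submodule.mem_span_singleton_self z)) _
  have hne : Submodule.span ℝ {z} ≠ ⊤ := fun htop => by
    have h := finrank_span_le_card (R := ℝ) {z}
    rw [htop, finrank_top] at h
    simp at h
  exact (tendsto_measureReal_convexHull_range_zero volume (measure_mono_null hsub
    (Measure.addHaar_submodule _ _ hne))).comp continuous_signedPoints.continuousAt

lemma abs_cross_signedPoints_div_four_le_hullVolume (x : ι → ℝ × ℝ) (j₁ j₂ j₃ : J) :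
    |cross (signedPoints s x j₂ - signedPoints s x j₁)
      (signedPoints s x j₃ - signedPoints s x j₁)| / 4 ≤ hullVolume s x :=
  abs_cross_div_four_le_volume (convex_convexHull ℝ _)
    (isCompact_convexHull_range _).measure_lt_top.ne (subset_convexHull ℝ _ ⟨j₁, rfl⟩)
    (subset_convexHull ℝ _ ⟨j₂, rfl⟩) (subset_convexHull ℝ _ ⟨j₃, rfl⟩)

/- At the collinear points `κ z`, `-κ z`, `r z` the original hull is degenerate, whereas the shear
by a function that is not linear along `z` opens up a triangle. -/
lemma exists_eventually_hullVolume_lt_verticalShear (hs : HasTriangle s) {f : C(ℝ, ℝ)}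
    (hf : ∀ x, f (-x) = -f x) {z : ℝ × ℝ} {κ r : ℝ} (hκ : |κ| < 1) (hr : |r| < 1)
    (hne : κ * f (r * z.1) ≠ r * f (κ * z.1)) {t : ℝ} (ht : t ≠ 0) {δ : ℝ} (hδ : 0 < δ) :
    ∃ c : ι → ℝ, (∀ i, |c i| < 1) ∧ ∀ᶠ x in 𝓝 fun i => c i • z,
      hullVolume s x < δ * hullVolume s (verticalShear (t • f) ∘ x) := by
  obtain ⟨c, hc, j₁, j₂, j₃, h₁, h₂, h₃⟩ := hs.exists_coeff hκ hr
  let D (x : ι → ℝ × ℝ) : ℝ := cross (signedPoints s x j₂ - signedPoints s x j₁)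
    (signedPoints s x j₃ - signedPoints s x j₁)
  have hD : Continuous D := by
    have hcont (j : J) : Continuous fun x : ι → ℝ × ℝ => signedPoints s x j :=
      (continuous_apply j).comp continuous_signedPoints
    exact continuous_cross.comp
      (((hcont j₂).sub (hcont j₁)).prodMk ((hcont j₃).sub (hcont j₁)))
  have hodd : ∀ y, (t • f) (-y) = -(t • f) y := by simp [hf]
  have hpoint (j : J) : signedPoints s (verticalShear (t • f) ∘ fun i => c i • z) j =
      verticalShear (t • f) (signedPoints s c j • z) := by
    rw [signedPoints_comp (verticalShear_neg hodd)]
    exact congrArg _ (smul_assoc _ _ _).symm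
  have hvalue : D (verticalShear (t • f) ∘ fun i => c i • z) =
      -2 * t * z.1 * (κ * f (r * z.1) - r * f (κ * z.1)) := by
    simp only [D, hpoint, h₁, h₂, h₃, cross, verticalShear_apply, hf, Prod.fst_sub, Prod.snd_sub,
      Prod.fst_neg, Prod.snd_neg, Prod.smul_fst, Prod.smul_snd, ContinuousMap.smul_apply,
      smul_eq_mul, neg_smul]
    ring
  have hz : z.1 ≠ 0 := fun hz => by
    simp [hz, self_eq_neg.1 (by simpa using hf 0)] at hne
  have hpos : 0 < δ * (|D (verticalShear (t • f) ∘ fun i => c i • z)| / 4) := by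
    have := sub_ne_zero.2 hne
    rw [hvalue]
    positivity
  have hcont : Continuous fun x => δ * (|D (verticalShear (t • f) ∘ x)| / 4) := by fun_prop
  refine ⟨c, hc, ?_⟩
  filter_upwards [(tendsto_hullVolume_zero_of_collinear (s := s) c z).eventually_lt
    hcont.continuousAt hpos]
    with x hx
  exact hx.trans_le (by gcongr; exact abs_cross_signedPoints_div_four_le_hullVolume _ j₁ j₂ j₃)

end NearlyCollinear

section Gluing

variable {V W : Type*} [AddCommGroup V] [Module ℝ V] [AddCommGroup W] [Module ℝ W]

lemma convex_setOf_segment_inter_nonempty {I : Set V} (hI : Convex ℝ I) (y : V) :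
    Convex ℝ {x | (segment ℝ x y ∩ I).Nonempty} := by
  rw [convex_iff_segment_subset]
  rintro x₁ ⟨i₁, h₁, hi₁⟩ x₂ ⟨i₂, h₂, hi₂⟩ z hz
  obtain ⟨w, hw, hw'⟩ := not_disjoint_iff.1 (not_disjoint_segment_convexHull_triple hz h₁ h₂)
  rw [insert_eq_of_mem (mem_insert y {z}), convexHull_pair, segment_symm] at hw'
  exact ⟨w, hw', hI.segment_subset hi₁ hi₂ hw⟩

lemma segment_subset_union_segment {a b i : V} (hi : i ∈ segment ℝ a b) :
    segment ℝ a b ⊆ segment ℝ a i ∪ segment ℝ i b := by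
  rw [segment_eq_image_lineMap] at hi
  obtain ⟨v, hv, rfl⟩ := hi
  have hsub : Icc (0 : ℝ) 1 ⊆ segment ℝ 0 v ∪ segment ℝ v 1 := by
    rw [segment_eq_Icc hv.1, segment_eq_Icc hv.2, Icc_union_Icc_eq_Icc hv.1 hv.2]
  rw [segment_eq_image_lineMap]
  refine (image_mono hsub).trans_eq ?_
  rw [image_union, image_segment, image_segment, AffineMap.lineMap_apply_zero,
    AffineMap.lineMap_apply_one]

lemma convexHull_union_subset_of_segment_inter_nonempty {A B I : Set V} (hI : Convex ℝ I)
    (hIA : I ⊆ convexHull ℝ A) (hIB : I ⊆ convexHull ℝ B)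
    (hcross : ∀ a ∈ A, ∀ b ∈ B, (segment ℝ a b ∩ I).Nonempty) :
    convexHull ℝ (A ∪ B) ⊆ convexHull ℝ A ∪ convexHull ℝ B := by
  rcases A.eq_empty_or_nonempty with rfl | hA
  · simp
  rcases B.eq_empty_or_nonempty with rfl | hB
  · simp
  have hcross' (a) (ha : a ∈ convexHull ℝ A) (b) (hb : b ∈ convexHull ℝ B) :
      (segment ℝ a b ∩ I).Nonempty := by
    refine convexHull_min (fun a ha => ?_) (convex_setOf_segment_inter_nonempty hI b) ha
    have := convexHull_min (fun b hb => ?_) (convex_setOf_segment_inter_nonempty hI a) hb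
    · rwa [mem_ofPred, segment_symm] at this
    · rw [mem_ofPred, segment_symm]
      exact hcross a ha b hb
  rw [convexHull_union hA hB]
  intro x hx
  obtain ⟨a, ha, b, hb, hx⟩ := mem_convexJoin.1 hx
  obtain ⟨i, hi, hiI⟩ := hcross' a ha b hb
  exact (segment_subset_union_segment hi hx).imp
    (fun h => (convex_convexHull ℝ A).segment_subset ha (hIA hiI) h)
    (fun h => (convex_convexHull ℝ B).segment_subset (hIB hiI) hb h)

lemma image_convexHull_of_eqOn_affineMap {f : V → W} {g : V →ᵃ[ℝ] W} {A G : Set V}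
    (hG : Convex ℝ G) (hA : A ⊆ G) (hfg : EqOn f g G) :
    f '' convexHull ℝ A = convexHull ℝ (f '' A) := by
  rw [(hfg.mono (convexHull_min hA hG)).image_eq, (hfg.mono hA).image_eq, g.image_convexHull]

end Gluing

section Capped

/-- The speed at which the shears move the vertical line over `x`: the lines with `|x| ≤ 1` stay
fixed, while the caps on either side of them are sheared linearly. -/
def capSpeed : C(ℝ, ℝ) where
  toFun x := max (x - 1) 0 - max (-x - 1) 0

lemma capSpeed_neg (x : ℝ) : capSpeed (-x) = -capSpeed x := by
  simp [capSpeed]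

lemma capSpeed_of_abs_le_one {x : ℝ} (hx : |x| ≤ 1) : capSpeed x = 0 := by
  obtain ⟨h₁, h₂⟩ := abs_le.1 hx
  simp [capSpeed, max_eq_right (by linarith : x - 1 ≤ 0), max_eq_right (by linarith : -x - 1 ≤ 0)]

lemma capSpeed_of_one_le {x : ℝ} (hx : 1 ≤ x) : capSpeed x = x - 1 := by
  simp [capSpeed, max_eq_left (by linarith : 0 ≤ x - 1), max_eq_right (by linarith : -x - 1 ≤ 0)]

lemma capSpeed_of_le_neg_one {x : ℝ} (hx : x ≤ -1) : capSpeed x = x + 1 := by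
  rw [← neg_neg x, capSpeed_neg, capSpeed_of_one_le (by linarith)]
  ring

/-- The segment along which the right cap is attached. -/
def gate : Set (ℝ × ℝ) := segment ℝ (1, -1) (1, 1)

lemma mk_mem_gate {y : ℝ} (hy : |y| ≤ 1) : ((1, y) : ℝ × ℝ) ∈ gate := by
  rw [gate, ← Prod.image_mk_segment_right, segment_eq_Icc (by norm_num)]
  exact mem_image_of_mem _ (abs_le.1 hy)

/-- A symmetric set `T` containing the endpoints of `gate`, for which one can pass from the
half-plane `x ≤ 1` to the half-plane `1 ≤ x` along segments between points of `T` only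
through `gate`. -/
structure IsCapped (T : Set (ℝ × ℝ)) : Prop where
  neg_mem : ∀ q ∈ T, -q ∈ T
  upper_mem : (1, 1) ∈ T
  lower_mem : (1, -1) ∈ T
  crossing : ∀ p ∈ T, ∀ q ∈ T, p.1 ≤ 1 → 1 ≤ q.1 → (segment ℝ p q ∩ gate).Nonempty

namespace IsCapped

variable {T : Set (ℝ × ℝ)}

lemma crossing_neg (hT : IsCapped T) {p q : ℝ × ℝ} (hp : p ∈ T) (hq : q ∈ T) (hp' : p.1 ≤ -1)
    (hq' : -1 ≤ q.1) : (segment ℝ p q ∩ -gate).Nonempty := by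
  obtain ⟨_, ⟨a, b, ha, hb, hab, rfl⟩, hw⟩ :=
    hT.crossing (-q) (hT.neg_mem q hq) (-p) (hT.neg_mem p hp) (neg_le.1 hq') (le_neg.1 hp')
  refine ⟨-(a • -q + b • -p), ⟨b, a, hb, ha, by linarith, by module⟩, ?_⟩
  rwa [Set.mem_neg, neg_neg]

lemma convexHull_subset (hT : IsCapped T) :
    convexHull ℝ T ⊆ convexHull ℝ (T ∩ {q | q.1 ≤ -1}) ∪ convexHull ℝ (T ∩ {q | |q.1| ≤ 1}) ∪
      convexHull ℝ (T ∩ {q | 1 ≤ q.1}) := by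
  have hgate {A : Set (ℝ × ℝ)} (hu : (1, 1) ∈ A) (hl : (1, -1) ∈ A) : gate ⊆ convexHull ℝ A :=
    segment_subset_convexHull hl hu
  have hgate_neg {A : Set (ℝ × ℝ)} (hu : (-1, 1) ∈ A) (hl : (-1, -1) ∈ A) :
      -gate ⊆ convexHull ℝ A := by
    rw [neg_subset, ← convexHull_neg]
    exact hgate (by simpa using hl) (by simpa using hu)
  have hupper : (-1, 1) ∈ T := by simpa using hT.neg_mem _ hT.lower_mem
  have hlower : (-1, -1) ∈ T := by simpa using hT.neg_mem _ hT.upper_mem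
  have hright : T ∩ {q | q.1 ≤ 1} ∪ T ∩ {q | 1 ≤ q.1} = T := by
    rw [← inter_union_distrib_left, inter_eq_left]
    exact fun q _ => le_total q.1 1
  have hleft : T ∩ {q | q.1 ≤ 1} = T ∩ {q | q.1 ≤ -1} ∪ T ∩ {q | |q.1| ≤ 1} := by
    ext q
    simp only [mem_inter_iff, mem_union, mem_ofPred_eq, abs_le]
    grind
  calc convexHull ℝ T = convexHull ℝ (T ∩ {q | q.1 ≤ 1} ∪ T ∩ {q | 1 ≤ q.1}) := by rw [hright]
    _ ⊆ convexHull ℝ (T ∩ {q | q.1 ≤ 1}) ∪ convexHull ℝ (T ∩ {q | 1 ≤ q.1}) :=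
      convexHull_union_subset_of_segment_inter_nonempty (I := gate) (convex_segment _ _)
        (hgate ⟨hT.upper_mem, le_refl (1 : ℝ)⟩ ⟨hT.lower_mem, le_refl (1 : ℝ)⟩)
        (hgate ⟨hT.upper_mem, le_refl (1 : ℝ)⟩ ⟨hT.lower_mem, le_refl (1 : ℝ)⟩)
        fun p hp q hq => hT.crossing p hp.1 q hq.1 hp.2 hq.2
    _ ⊆ _ := by
      rw [hleft]
      refine union_subset_union_left _ ?_
      exact convexHull_union_subset_of_segment_inter_nonempty (convex_segment _ _).neg
        (hgate_neg ⟨hupper, le_refl (-1 : ℝ)⟩ ⟨hlower, le_refl (-1 : ℝ)⟩)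
        (hgate_neg ⟨hupper, by simp⟩ ⟨hlower, by simp⟩)
        fun p hp q hq => hT.crossing_neg hp.1 hq.1 hp.2 (abs_le.1 hq.2).1

end IsCapped

lemma verticalShear_image_convexHull_of_affineOn {f : C(ℝ, ℝ)} {I : Set ℝ} (hI : Convex ℝ I)
    {α β : ℝ} (hf : ∀ x ∈ I, f x = α * x + β) {A : Set (ℝ × ℝ)} (hA : A ⊆ Prod.fst ⁻¹' I) :
    verticalShear f '' convexHull ℝ A = convexHull ℝ (verticalShear f '' A) := by
  let g : ℝ × ℝ →ᵃ[ℝ] ℝ × ℝ :=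
    ((LinearMap.fst ℝ ℝ ℝ).prod (LinearMap.snd ℝ ℝ ℝ + α • LinearMap.fst ℝ ℝ ℝ)).toAffineMap +
      AffineMap.const ℝ _ (0, β)
  refine image_convexHull_of_eqOn_affineMap (g := g)
    (hI.linear_preimage (LinearMap.fst ℝ ℝ ℝ)) hA fun q hq => ?_
  rw [verticalShear_apply, hf q.1 hq]
  simp [g, add_assoc]

lemma IsCapped.verticalShear_image_convexHull_subset {T : Set (ℝ × ℝ)} (hT : IsCapped T) (t : ℝ) :
    verticalShear (t • capSpeed) '' convexHull ℝ T ⊆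
      convexHull ℝ (verticalShear (t • capSpeed) '' T) := by
  have hpiece {A : Set (ℝ × ℝ)} {I : Set ℝ} (hI : Convex ℝ I) {α β : ℝ}
      (hf : ∀ x ∈ I, capSpeed x = α * x + β) (hA : A ⊆ Prod.fst ⁻¹' I) (hAT : A ⊆ T) :
      verticalShear (t • capSpeed) '' convexHull ℝ A ⊆
        convexHull ℝ (verticalShear (t • capSpeed) '' T) := by
    rw [verticalShear_image_convexHull_of_affineOn hI (α := t * α) (β := t * β) (fun x hx => ?_) hA]
    · exact convexHull_mono (image_mono hAT)
    · rw [ContinuousMap.smul_apply, hf x hx, smul_eq_mul]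
      ring
  refine (image_mono hT.convexHull_subset).trans ?_
  rw [image_union, image_union]
  refine union_subset (union_subset ?_ ?_) ?_
  · exact hpiece (convex_Iic (-1)) (α := 1) (β := 1)
      (fun x hx => by rw [capSpeed_of_le_neg_one hx, one_mul])
      inter_subset_right inter_subset_left
  · exact hpiece (convex_Icc (-1) 1) (α := 0) (β := 0)
      (fun x hx => by rw [capSpeed_of_abs_le_one (abs_le.2 hx), zero_mul, add_zero])
      (fun q hq => abs_le.1 hq.2) inter_subset_left
  · exact hpiece (convex_Ici 1) (α := 1) (β := -1)
      (fun x hx => by rw [capSpeed_of_one_le hx, one_mul, sub_eq_add_neg])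
      inter_subset_right inter_subset_left

lemma IsCapped.verticalShear_image_convexHull {T : Set (ℝ × ℝ)} (hT : IsCapped T) {t : ℝ}
    (hT' : IsCapped (verticalShear (t • capSpeed) '' T)) :
    verticalShear (t • capSpeed) '' convexHull ℝ T =
      convexHull ℝ (verticalShear (t • capSpeed) '' T) := by
  refine (hT.verticalShear_image_convexHull_subset t).antisymm ?_
  have h := hT'.verticalShear_image_convexHull_subset (-t)
  rw [neg_smul, ← verticalShear_symm, ← image_comp, Homeomorph.symm_comp_self, image_id] at h
  rw [Homeomorph.image_symm] at h
  exact (image_preimage_eq _ (verticalShear _).surjective).symm.subset.trans (image_mono h)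

end Capped

section Polygon

/-- A symmetric convex polygon: a convex body, symmetric about the origin, with finitely many
vertices. The ambient space is arbitrary, so in higher dimensions these are polytopes. -/
structure IsSymPolygon {V : Type*} [AddCommGroup V] [Module ℝ V] [TopologicalSpace V]
    (K : Set V) : Prop where
  convex : Convex ℝ K
  isCompact : IsCompact K
  nonempty_interior : (interior K).Nonempty
  neg_mem : ∀ x ∈ K, -x ∈ K
  finite_extremePoints : (extremePoints ℝ K).Finite

namespace IsSymPolygon

variable {V W : Type*} [AddCommGroup V] [Module ℝ V] [TopologicalSpace V]
  [AddCommGroup W] [Module ℝ W] [TopologicalSpace W] {K : Set V}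

lemma neg_mem_extremePoints (hK : IsSymPolygon K) {x : V} (hx : x ∈ extremePoints ℝ K) :
    -x ∈ extremePoints ℝ K := by
  have hneg : LinearEquiv.neg ℝ '' K = K := by
    rw [show (LinearEquiv.neg ℝ : V → V) = Neg.neg from rfl, image_neg_eq_neg]
    exact (neg_subset.2 fun y hy => hK.neg_mem y hy).antisymm fun y hy => hK.neg_mem y hy
  have := image_extremePoints (𝕜 := ℝ) (LinearEquiv.neg ℝ) K
  rw [hneg] at this
  exact this.subset ⟨x, hx, rfl⟩

lemma image_continuousLinearEquiv (hK : IsSymPolygon K) (e : V ≃L[ℝ] W) :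
    IsSymPolygon (e '' K) where
  convex := hK.convex.linear_image e.toLinearMap
  isCompact := hK.isCompact.image e.continuous
  nonempty_interior := by
    exact (e.toHomeomorph.image_interior K).symm ▸ hK.nonempty_interior.image e
  neg_mem := by
    rintro _ ⟨x, hx, rfl⟩
    exact ⟨-x, hK.neg_mem x hx, map_neg e x⟩
  finite_extremePoints := by
    rw [← image_extremePoints]
    exact hK.finite_extremePoints.image e

lemma convexHull_extremePoints [T2Space V] [IsTopologicalAddGroup V] [ContinuousSMul ℝ V]
    [LocallyConvexSpace ℝ V] (hK : IsSymPolygon K) : convexHull ℝ (extremePoints ℝ K) = K := by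
  rw [← (hK.finite_extremePoints.isClosed_convexHull ℝ).closure_eq,
    closure_convexHull_extremePoints hK.isCompact hK.convex]

lemma span_extremePoints_eq_top [T2Space V] [IsTopologicalAddGroup V] [ContinuousSMul ℝ V]
    [LocallyConvexSpace ℝ V] (hK : IsSymPolygon K) :
    Submodule.span ℝ (extremePoints ℝ K) = ⊤ := by
  have hsub : K ⊆ Submodule.span ℝ (extremePoints ℝ K) := by
    conv_lhs => rw [← hK.convexHull_extremePoints]
    exact convexHull_min Submodule.subset_span (Submodule.convex _)
  exact Submodule.eq_top_of_nonempty_interior' _ (hK.nonempty_interior.mono (interior_mono hsub))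

end IsSymPolygon

lemma ncard_extremePoints_image {V W : Type*} [AddCommGroup V] [Module ℝ V] [TopologicalSpace V]
    [AddCommGroup W] [Module ℝ W] [TopologicalSpace W] (e : V ≃L[ℝ] W) (K : Set V) :
    (extremePoints ℝ (e '' K)).ncard = (extremePoints ℝ K).ncard := by
  rw [← image_extremePoints, ncard_image_of_injective _ e.injective]

end Polygon

section EndTimes

/-- The height at which the segment from `p` to `q` crosses the line `x = 1`
(for `p.1 < 1 < q.1`). -/
def crossHeight (p q : ℝ × ℝ) : ℝ := (p.2 * (q.1 - 1) + q.2 * (1 - p.1)) / (q.1 - p.1)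

lemma mk_crossHeight_mem_openSegment {p q : ℝ × ℝ} (hp : p.1 < 1) (hq : 1 < q.1) :
    (1, crossHeight p q) ∈ openSegment ℝ p q := by
  have hpq : 0 < q.1 - p.1 := by linarith
  refine ⟨(q.1 - 1) / (q.1 - p.1), (1 - p.1) / (q.1 - p.1), div_pos (by linarith) hpq,
    div_pos (by linarith) hpq, by field_simp; ring, ?_⟩
  ext
  · simp only [Prod.fst_add, Prod.smul_fst, smul_eq_mul]
    field_simp
    ring
  · simp only [crossHeight, Prod.snd_add, Prod.smul_snd, smul_eq_mul]
    ring

/-- The rate of change of `crossHeight` along the cap shears. -/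
def crossSpeed (p q : ℝ × ℝ) : ℝ := (q.1 - 1) * (capSpeed p.1 + (1 - p.1)) / (q.1 - p.1)

lemma crossHeight_verticalShear {p q : ℝ × ℝ} (hq : 1 < q.1) (t : ℝ) :
    crossHeight (verticalShear (t • capSpeed) p) (verticalShear (t • capSpeed) q) =
      crossHeight p q + t * crossSpeed p q := by
  simp only [crossHeight, crossSpeed, verticalShear_apply, ContinuousMap.smul_apply, smul_eq_mul,
    capSpeed_of_one_le hq.le]
  ring

lemma crossSpeed_pos {p q : ℝ × ℝ} (hp : p.1 < 1) (hq : 1 < q.1) : 0 < crossSpeed p q := by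
  have hspeed : 0 < capSpeed p.1 + (1 - p.1) := by
    rcases le_total p.1 (-1) with h | h
    · rw [capSpeed_of_le_neg_one h]
      linarith
    · rw [capSpeed_of_abs_le_one (abs_le.2 ⟨h, hp.le⟩)]
      linarith
  exact div_pos (mul_pos (by linarith) hspeed) (by linarith)

lemma exists_pos_forall_add_mul_le_one {α : Type*} {Z : Set α} (hZ : Z.Finite)
    (hne : Z.Nonempty) {h v : α → ℝ} (hh : ∀ z ∈ Z, h z < 1) (hv : ∀ z ∈ Z, 0 < v z) :
    ∃ b > 0, (∀ z ∈ Z, h z + b * v z ≤ 1) ∧ ∃ z ∈ Z, h z + b * v z = 1 := by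
  obtain ⟨z, hz, hmin⟩ := exists_min_image Z (fun z => (1 - h z) / v z) hZ hne
  have hvz := hv z hz
  refine ⟨(1 - h z) / v z, div_pos (sub_pos.2 (hh z hz)) hvz, fun y hy => ?_, z, hz, ?_⟩
  · have := (le_div_iff₀ (hv y hy)).1 (hmin y hy)
    linarith
  · field_simp
    ring

variable {K : Set (ℝ × ℝ)}

lemma abs_le_one_of_mk_one_mem (hu : (1, 1) ∈ extremePoints ℝ K)
    (hl : (1, -1) ∈ extremePoints ℝ K) {y : ℝ} (hy : (1, y) ∈ K) : |y| ≤ 1 := by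
  have hmem {a b c : ℝ} (hab : a < b) (hbc : b < c) :
      ((1, b) : ℝ × ℝ) ∈ openSegment ℝ (1, a) (1, c) := by
    rw [← Prod.image_mk_openSegment_right, openSegment_eq_Ioo (hab.trans hbc)]
    exact mem_image_of_mem _ ⟨hab, hbc⟩
  by_contra! h
  rcases lt_abs.1 h with h | h
  · have := mem_extremePoints.1 hu |>.2 _ hl.1 _ hy (hmem (by norm_num) h)
    norm_num at this
  · have := mem_extremePoints.1 hl |>.2 _ hy _ hu.1 (hmem (lt_neg.1 h) (by norm_num))
    norm_num at this

lemma abs_crossHeight_lt_one (hK : Convex ℝ K) (hu : (1, 1) ∈ extremePoints ℝ K)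
    (hl : (1, -1) ∈ extremePoints ℝ K) {p q : ℝ × ℝ} (hp : p ∈ K) (hq : q ∈ K) (hp' : p.1 < 1)
    (hq' : 1 < q.1) : |crossHeight p q| < 1 := by
  have hmem := mk_crossHeight_mem_openSegment hp' hq'
  refine (abs_le_one_of_mk_one_mem hu hl (hK.openSegment_subset hp hq hmem)).lt_of_ne fun h => ?_
  have hextreme : (1, crossHeight p q) ∈ extremePoints ℝ K := by
    rcases (abs_eq one_pos.le).1 h with h | h <;> rwa [h]
  have := ((mem_extremePoints.1 hextreme).2 p hp q hq hmem).1
  exact hp'.ne (congrArg Prod.fst this)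

/-- A time at which some segment between points of `S` on either side of the line `x = 1` passes
through an endpoint of `gate` while none passes outside `gate`. -/
def IsEndTime (S : Set (ℝ × ℝ)) (t : ℝ) : Prop :=
  (∀ p ∈ S, ∀ q ∈ S, p.1 < 1 → 1 < q.1 →
    |crossHeight (verticalShear (t • capSpeed) p) (verticalShear (t • capSpeed) q)| ≤ 1) ∧
  ∃ p ∈ S, ∃ q ∈ S, p.1 < 1 ∧ 1 < q.1 ∧
    |crossHeight (verticalShear (t • capSpeed) p) (verticalShear (t • capSpeed) q)| = 1

lemma exists_isEndTime (hK : IsSymPolygon K) (hu : (1, 1) ∈ extremePoints ℝ K)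
    (hl : (1, -1) ∈ extremePoints ℝ K) {z : ℝ × ℝ} (hz : z ∈ extremePoints ℝ K) (hz' : 1 < z.1)
    {σ : ℝ} (hσ : |σ| = 1) : ∃ b > 0, IsEndTime (extremePoints ℝ K) (σ * b) := by
  let Z : Set ((ℝ × ℝ) × ℝ × ℝ) :=
    {w | (w.1 ∈ extremePoints ℝ K ∧ w.2 ∈ extremePoints ℝ K) ∧ w.1.1 < 1 ∧ 1 < w.2.1}
  have hZ : Z.Finite :=
    (hK.finite_extremePoints.prod hK.finite_extremePoints).subset fun w hw => hw.1
  have hne : Z.Nonempty :=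
    ⟨((-1, -1), z), ⟨by simpa using hK.neg_mem_extremePoints hu, hz⟩, by norm_num, hz'⟩
  have hheight (w) (hw : w ∈ Z) : |σ * crossHeight w.1 w.2| < 1 := by
    rw [abs_mul, hσ, one_mul]
    exact abs_crossHeight_lt_one hK.convex hu hl hw.1.1.1 hw.1.2.1 hw.2.1 hw.2.2
  obtain ⟨b, hb, hle, ⟨p, q⟩, hw, heq⟩ := exists_pos_forall_add_mul_le_one hZ hne
    (fun w hw => (abs_lt.1 (hheight w hw)).2) fun w hw => crossSpeed_pos hw.2.1 hw.2.2
  have hshear {p q : ℝ × ℝ} (hq : 1 < q.1) :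
      |crossHeight (verticalShear ((σ * b) • capSpeed) p) (verticalShear ((σ * b) • capSpeed) q)| =
        |σ * crossHeight p q + b * crossSpeed p q| := by
    have hσσ : σ * σ = 1 := by rw [← abs_mul_abs_self, hσ, one_mul]
    rw [crossHeight_verticalShear hq, ← one_mul |crossHeight p q + _|, ← hσ, ← abs_mul]
    congr 1
    linear_combination b * crossSpeed p q * hσσ
  refine ⟨b, hb, fun p hp q hq hp' hq' => ?_, p, hw.1.1, q, hw.1.2, hw.2.1, hw.2.2, ?_⟩
  · have hw : (p, q) ∈ Z := ⟨⟨hp, hq⟩, hp', hq'⟩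
    rw [hshear hq', abs_le]
    have := (abs_lt.1 (hheight _ hw)).1
    have := mul_pos hb (crossSpeed_pos hp' hq')
    exact ⟨by linarith, hle _ hw⟩
  · rw [hshear hw.2.2, heq, abs_one]

lemma isCapped_verticalShear_image (hK : IsSymPolygon K) (hu : (1, 1) ∈ extremePoints ℝ K)
    (hl : (1, -1) ∈ extremePoints ℝ K) {t : ℝ}
    (ht : ∀ p ∈ extremePoints ℝ K, ∀ q ∈ extremePoints ℝ K, p.1 < 1 → 1 < q.1 →
      |crossHeight (verticalShear (t • capSpeed) p) (verticalShear (t • capSpeed) q)| ≤ 1) :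
    IsCapped (verticalShear (t • capSpeed) '' extremePoints ℝ K) := by
  have hfixed {y : ℝ} : verticalShear (t • capSpeed) (1, y) = (1, y) := by
    simp [verticalShear_apply, capSpeed_of_one_le]
  have hgate {q : ℝ × ℝ} (hq : q ∈ extremePoints ℝ K) (hq' : q.1 = 1) :
      verticalShear (t • capSpeed) q ∈ gate := by
    obtain ⟨x, y⟩ := q
    obtain rfl : x = 1 := hq'
    rw [hfixed]
    exact mk_mem_gate (abs_le_one_of_mk_one_mem hu hl hq.1)
  refine ⟨?_, ⟨_, hu, hfixed⟩, ⟨_, hl, hfixed⟩, ?_⟩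
  · rintro _ ⟨q, hq, rfl⟩
    exact ⟨-q, hK.neg_mem_extremePoints hq, verticalShear_neg (by simp [capSpeed_neg]) q⟩
  · rintro _ ⟨p, hp, rfl⟩ _ ⟨q, hq, rfl⟩ (hp' : p.1 ≤ 1) (hq' : 1 ≤ q.1)
    rcases hp'.eq_or_lt with hp' | hp'
    · exact ⟨_, left_mem_segment ℝ _ _, hgate hp hp'⟩
    rcases hq'.eq_or_lt with hq' | hq'
    · exact ⟨_, right_mem_segment ℝ _ _, hgate hq hq'.symm⟩
    · exact ⟨_, openSegment_subset_segment ℝ _ _ (mk_crossHeight_mem_openSegment hp' hq'),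
        mk_mem_gate (ht p hp q hq hp' hq')⟩

lemma verticalShear_image_eq_convexHull (hK : IsSymPolygon K) (hu : (1, 1) ∈ extremePoints ℝ K)
    (hl : (1, -1) ∈ extremePoints ℝ K) {t : ℝ} (ht : IsEndTime (extremePoints ℝ K) t) :
    verticalShear (t • capSpeed) '' K =
      convexHull ℝ (verticalShear (t • capSpeed) '' extremePoints ℝ K) := by
  have hcapped : IsCapped (extremePoints ℝ K) := by
    have := isCapped_verticalShear_image (t := 0) hK hu hl fun p hp q hq hp' hq' => by
      rw [crossHeight_verticalShear hq', zero_mul, add_zero]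
      exact (abs_crossHeight_lt_one hK.convex hu hl hp.1 hq.1 hp' hq').le
    simpa [verticalShear_zero] using this
  conv_lhs => rw [← hK.convexHull_extremePoints]
  exact hcapped.verticalShear_image_convexHull (isCapped_verticalShear_image hK hu hl ht.1)

lemma isSymPolygon_verticalShear_image (hK : IsSymPolygon K) (hu : (1, 1) ∈ extremePoints ℝ K)
    (hl : (1, -1) ∈ extremePoints ℝ K) {t : ℝ} (ht : IsEndTime (extremePoints ℝ K) t) :
    IsSymPolygon (verticalShear (t • capSpeed) '' K) where
  convex := verticalShear_image_eq_convexHull hK hu hl ht ▸ convex_convexHull ℝ _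
  isCompact := hK.isCompact.image (verticalShear _).continuous
  nonempty_interior := by
    rw [← (verticalShear _).image_interior]
    exact hK.nonempty_interior.image _
  neg_mem := by
    rintro _ ⟨x, hx, rfl⟩
    exact ⟨-x, hK.neg_mem x hx, verticalShear_neg (by simp [capSpeed_neg]) x⟩
  finite_extremePoints := by
    rw [verticalShear_image_eq_convexHull hK hu hl ht]
    exact (hK.finite_extremePoints.image _).subset extremePoints_convexHull_subset

lemma ncard_extremePoints_verticalShear_image_lt (hK : IsSymPolygon K)
    (hu : (1, 1) ∈ extremePoints ℝ K) (hl : (1, -1) ∈ extremePoints ℝ K) {t : ℝ}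
    (ht : IsEndTime (extremePoints ℝ K) t) :
    (extremePoints ℝ (verticalShear (t • capSpeed) '' K)).ncard < (extremePoints ℝ K).ncard := by
  obtain ⟨p, hp, q, hq, hp', hq', habs⟩ := ht.2
  set φ := verticalShear (t • capSpeed)
  have hsub : extremePoints ℝ (φ '' K) ⊆ φ '' extremePoints ℝ K := by
    rw [verticalShear_image_eq_convexHull hK hu hl ht]
    exact extremePoints_convexHull_subset
  have hmem : (1, crossHeight (φ p) (φ q)) ∈ φ '' extremePoints ℝ K := by
    have hcapped := isCapped_verticalShear_image hK hu hl ht.1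
    rcases (abs_eq one_pos.le).1 habs with h | h <;> rw [h]
    exacts [hcapped.upper_mem, hcapped.lower_mem]
  have hnot : (1, crossHeight (φ p) (φ q)) ∉ extremePoints ℝ (φ '' K) := fun h =>
    hp'.ne (congrArg Prod.fst (((mem_extremePoints.1 h).2 _ (mem_image_of_mem φ hp.1) _
      (mem_image_of_mem φ hq.1) (mk_crossHeight_mem_openSegment hp' hq')).1))
  rw [← ncard_image_of_injective (extremePoints ℝ K) φ.injective]
  exact ncard_lt_ncard (ssubset_iff_exists.2 ⟨hsub, _, hmem, hnot⟩)
    (hK.finite_extremePoints.image φ)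

end EndTimes

section Square

/-- The vertices of the square `[-1, 1]²`. -/
def corners : Set (ℝ × ℝ) := {-1, 1} ×ˢ {-1, 1}

/-- The square `[-1, 1]²`. -/
def square : Set (ℝ × ℝ) := Icc (-1) 1 ×ˢ Icc (-1) 1

lemma convexHull_corners : convexHull ℝ corners = square := by
  rw [corners, convexHull_prod, convexHull_pair, segment_eq_Icc (by norm_num), square]

lemma ncard_corners : corners.ncard = 4 := by
  rw [corners, ncard_prod, ncard_pair (by norm_num)]

lemma exists_mem_cross_ne_zero {S : Set (ℝ × ℝ)} (hS : Submodule.span ℝ S = ⊤) :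
    ∃ v ∈ S, ∃ w ∈ S, cross v w ≠ 0 := by
  by_contra! hcross
  have hzero {v w : ℝ × ℝ} (hv : v ∈ Submodule.span ℝ S) (hw : w ∈ Submodule.span ℝ S) :
      cross v w = 0 := by
    induction hv, hw using Submodule.span_induction₂ with
    | mem_mem v w hv hw => exact hcross v hv w hw
    | zero_left w _ => simp [cross]
    | zero_right v _ => simp [cross]
    | add_left v v' w _ _ _ h h' =>
      simp only [cross, Prod.fst_add, Prod.snd_add] at h h' ⊢
      linear_combination h + h'
    | add_right v w w' _ _ _ h h' =>
      simp only [cross, Prod.fst_add, Prod.snd_add] at h h' ⊢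
      linear_combination h + h'
    | smul_left r v w _ _ h =>
      simp only [cross, Prod.smul_fst, Prod.smul_snd, smul_eq_mul] at h ⊢
      linear_combination r * h
    | smul_right r v w _ _ h =>
      simp only [cross, Prod.smul_fst, Prod.smul_snd, smul_eq_mul] at h ⊢
      linear_combination r * h
  have hone : cross (1, 0) (0, 1) = 1 := by simp [cross]
  exact one_ne_zero (hone.symm.trans (hzero (by simp [hS]) (by simp [hS])))

lemma exists_continuousLinearEquiv_apply_eq {v w : ℝ × ℝ} (hvw : cross v w ≠ 0) :
    ∃ e : (ℝ × ℝ) ≃L[ℝ] ℝ × ℝ, e v = (1, 1) ∧ e w = (1, -1) := by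
  let f := pairMap ((1 / 2 : ℝ) • (v + w)) ((1 / 2 : ℝ) • (v - w))
  have hdet : LinearMap.det f ≠ 0 := by
    have : LinearMap.det f = -(cross v w / 2) := by
      simp only [f, det_pairMap, cross, Prod.smul_fst, Prod.smul_snd, Prod.fst_add, Prod.snd_add,
        Prod.fst_sub, Prod.snd_sub, smul_eq_mul]
      ring
    rw [this]
    exact neg_ne_zero.2 (div_ne_zero hvw two_ne_zero)
  let e := (f.equivOfDetNeZero hdet).toContinuousLinearEquiv
  have he (q : ℝ × ℝ) : e q = q.1 • (1 / 2 : ℝ) • (v + w) + q.2 • (1 / 2 : ℝ) • (v - w) := rfl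
  refine ⟨e.symm, e.symm_apply_eq.2 ?_, e.symm_apply_eq.2 ?_⟩ <;> rw [he] <;> module

variable {K : Set (ℝ × ℝ)}

lemma IsSymPolygon.exists_corners_subset (hK : IsSymPolygon K) :
    ∃ e : (ℝ × ℝ) ≃L[ℝ] ℝ × ℝ, corners ⊆ extremePoints ℝ (e '' K) := by
  obtain ⟨v, hv, w, hw, hvw⟩ := exists_mem_cross_ne_zero hK.span_extremePoints_eq_top
  obtain ⟨e, hev, hew⟩ := exists_continuousLinearEquiv_apply_eq hvw
  have hK' := hK.image_continuousLinearEquiv e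
  have hu : (1, 1) ∈ extremePoints ℝ (e '' K) := image_extremePoints e K ▸ ⟨v, hv, hev⟩
  have hl : (1, -1) ∈ extremePoints ℝ (e '' K) := image_extremePoints e K ▸ ⟨w, hw, hew⟩
  refine ⟨e, ?_⟩
  rintro ⟨x, y⟩ ⟨rfl | rfl, rfl | rfl⟩
  · simpa using hK'.neg_mem_extremePoints hu
  · simpa using hK'.neg_mem_extremePoints hl
  · exact hl
  · exact hu

lemma IsSymPolygon.eq_square (hK : IsSymPolygon K) (hcorners : corners ⊆ extremePoints ℝ K)
    (hcard : (extremePoints ℝ K).ncard ≤ 4) : K = square := by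
  have := eq_of_subset_of_ncard_le hcorners (hcard.trans ncard_corners.ge) hK.finite_extremePoints
  rw [← hK.convexHull_extremePoints, ← this, convexHull_corners]

lemma IsSymPolygon.exists_mem_extremePoints_notMem_square (hK : IsSymPolygon K)
    (hcorners : corners ⊆ extremePoints ℝ K) (hcard : 4 < (extremePoints ℝ K).ncard) :
    ∃ z ∈ extremePoints ℝ K, z ∉ square := by
  obtain ⟨z, hz, hz'⟩ := exists_mem_notMem_of_ncard_lt_ncard (ncard_corners.trans_lt hcard)
    (finite_of_ncard_ne_zero (by simp [ncard_corners]))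
  have hsub : square ⊆ K :=
    convexHull_corners ▸ convexHull_min (hcorners.trans extremePoints_subset) hK.convex
  have hextreme : extremePoints ℝ square ⊆ corners :=
    convexHull_corners ▸ extremePoints_convexHull_subset
  exact ⟨z, hz, fun h =>
    hz' (hextreme (inter_extremePoints_subset_extremePoints_of_subset hsub ⟨h, hz⟩))⟩

lemma image_prodComm_corners : ContinuousLinearEquiv.prodComm ℝ ℝ ℝ '' corners = corners :=
  image_swap_prod _ _

lemma IsSymPolygon.exists_one_lt_fst (hK : IsSymPolygon K) (hcorners : corners ⊆ extremePoints ℝ K)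
    (hcard : 4 < (extremePoints ℝ K).ncard) :
    ∃ e : (ℝ × ℝ) ≃L[ℝ] ℝ × ℝ, corners ⊆ extremePoints ℝ (e '' K) ∧
      ∃ z ∈ extremePoints ℝ (e '' K), 1 < z.1 := by
  have hpos {y : ℝ} (hy : y ∉ Icc (-1) 1) : 1 < y ∨ 1 < -y := by
    rwa [← lt_abs, ← not_le, abs_le]
  obtain ⟨z, hz, hzs⟩ := hK.exists_mem_extremePoints_notMem_square hcorners hcard
  have hz' := hK.neg_mem_extremePoints hz
  by_cases hz₁ : z.1 ∈ Icc (-1) 1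
  · have hz₂ : z.2 ∉ Icc (-1) 1 := fun h => hzs ⟨hz₁, h⟩
    refine ⟨.prodComm ℝ ℝ ℝ, ?_⟩
    rw [← image_extremePoints]
    refine ⟨image_prodComm_corners.symm.subset.trans (image_mono hcorners), ?_⟩
    rcases hpos hz₂ with h | h
    exacts [⟨_, mem_image_of_mem _ hz, h⟩, ⟨_, mem_image_of_mem _ hz', h⟩]
  · refine ⟨.refl ℝ _, ?_⟩
    rw [ContinuousLinearEquiv.coe_refl', image_id]
    rcases hpos hz₁ with h | h
    exacts [⟨hcorners, _, hz, h⟩, ⟨hcorners, _, hz', h⟩]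

end Square

section Descent

variable {ι J : Type*} [Fintype ι] [Finite J] {s : J → ι × ℤˣ} {p : ℝ} {K : Set (ℝ × ℝ)}

lemma capSpeed_ne_of_one_lt {x : ℝ} (hx : 1 < x) :
    x⁻¹ * capSpeed ((x⁻¹ + 1) / 2 * x) ≠ (x⁻¹ + 1) / 2 * capSpeed (x⁻¹ * x) := by
  have hx₀ : 0 < x := one_pos.trans hx
  have hmid : (x⁻¹ + 1) / 2 * x = (1 + x) / 2 := by field_simp
  rw [hmid, inv_mul_cancel₀ hx₀.ne', capSpeed_of_one_le (by linarith), capSpeed_of_one_le le_rfl,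
    sub_self, mul_zero]
  exact mul_ne_zero (inv_ne_zero hx₀.ne') (by linarith)

lemma exists_lt_hullMoment_of_one_lt_fst (hs : HasTriangle s) (hp : 1 ≤ p) (hK : IsSymPolygon K)
    (hu : (1, 1) ∈ extremePoints ℝ K) (hl : (1, -1) ∈ extremePoints ℝ K) {z : ℝ × ℝ}
    (hz : z ∈ extremePoints ℝ K) (hz' : 1 < z.1) :
    ∃ K' : Set (ℝ × ℝ), IsSymPolygon K' ∧
      (extremePoints ℝ K').ncard < (extremePoints ℝ K).ncard ∧
      hullMoment s p K < hullMoment s p K' := by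
  obtain ⟨a, ha, hEnd_a⟩ := exists_isEndTime hK hu hl hz hz' (σ := -1) (by simp)
  obtain ⟨b, hb, hEnd_b⟩ := exists_isEndTime hK hu hl hz hz' (σ := 1) (by simp)
  rw [neg_one_mul] at hEnd_a
  rw [one_mul] at hEnd_b
  have hpolygon {t : ℝ} := isSymPolygon_verticalShear_image hK hu hl (t := t)
  have hinv : z.1⁻¹ < 1 := inv_lt_one_of_one_lt₀ hz'
  have hinv₀ : 0 < z.1⁻¹ := inv_pos.2 (one_pos.trans hz')
  obtain ⟨c, hc, hlt⟩ := exists_eventually_hullVolume_lt_verticalShear hs capSpeed_neg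
    (abs_lt.2 ⟨by linarith, hinv⟩) (abs_lt.2 ⟨by linarith, by linarith⟩)
    (capSpeed_ne_of_one_lt hz') (neg_ne_zero.2 ha.ne') (div_pos hb (by linarith : 0 < b - -a))
  have hmax := hullMoment_lt_max_of_eventually_lt capSpeed_neg hK.convex hK.isCompact
    hK.nonempty_interior hK.neg_mem (neg_lt_zero.2 ha) hb (hpolygon hEnd_a).convex
    (hpolygon hEnd_b).convex
    (fun i => smul_mem_interior_of_abs_lt_one hK.convex hK.neg_mem hK.nonempty_interior hz.1 (hc i))
    hlt hp
  rcases lt_max_iff.1 hmax with h | h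
  · exact ⟨_, hpolygon hEnd_a, ncard_extremePoints_verticalShear_image_lt hK hu hl hEnd_a, h⟩
  · exact ⟨_, hpolygon hEnd_b, ncard_extremePoints_verticalShear_image_lt hK hu hl hEnd_b, h⟩

lemma exists_lt_hullMoment_of_four_lt (hs : HasTriangle s) (hp : 1 ≤ p) (hK : IsSymPolygon K)
    (hcard : 4 < (extremePoints ℝ K).ncard) :
    ∃ K' : Set (ℝ × ℝ), IsSymPolygon K' ∧
      (extremePoints ℝ K').ncard < (extremePoints ℝ K).ncard ∧
      hullMoment s p K < hullMoment s p K' := by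
  obtain ⟨e, he⟩ := hK.exists_corners_subset
  have hKe := hK.image_continuousLinearEquiv e
  rw [← ncard_extremePoints_image e] at hcard
  obtain ⟨e', he', z, hz, hz'⟩ := hKe.exists_one_lt_fst he hcard
  have := exists_lt_hullMoment_of_one_lt_fst hs hp (hKe.image_continuousLinearEquiv e')
    (he' (by simp [corners])) (he' (by simp [corners])) hz hz'
  simpa only [ncard_extremePoints_image, hullMoment_continuousLinearEquiv_image] using this

lemma hullMoment_le_square (hs : HasTriangle s) (hp : 1 ≤ p) (hK : IsSymPolygon K) :
    hullMoment s p K ≤ hullMoment s p square := by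
  induction hn : (extremePoints ℝ K).ncard using Nat.strong_induction_on generalizing K with
  | _ n ih =>
    rcases le_or_gt n 4 with hcard | hcard
    · obtain ⟨e, he⟩ := hK.exists_corners_subset
      have hsquare := (hK.image_continuousLinearEquiv e).eq_square he
        (by rwa [ncard_extremePoints_image, hn])
      rw [← hsquare, hullMoment_continuousLinearEquiv_image]
    · obtain ⟨K', hK', hcard', hlt⟩ := exists_lt_hullMoment_of_four_lt hs hp hK (hn ▸ hcard)
      exact hlt.le.trans (ih _ (hn ▸ hcard') hK' rfl)

lemma hullMoment_lt_square (hs : HasTriangle s) (hp : 1 ≤ p) (hK : IsSymPolygon K)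
    (hcard : 4 < (extremePoints ℝ K).ncard) : hullMoment s p K < hullMoment s p square := by
  obtain ⟨K', hK', -, hlt⟩ := exists_lt_hullMoment_of_four_lt hs hp hK hcard
  exact hlt.trans_le (hullMoment_le_square hs hp hK')

theorem hullMoment_lt_image_square {V : Type*} [NormedAddCommGroup V] [NormedSpace ℝ V]
    [MeasureSpace V] [BorelSpace V] [(volume : Measure V).IsAddHaarMeasure] (hs : HasTriangle s)
    (hp : 1 ≤ p) {K : Set V} (hK : IsSymPolygon K) (hcard : 4 < (extremePoints ℝ K).ncard)
    (e : (ℝ × ℝ) ≃L[ℝ] V) : hullMoment s p K < hullMoment s p (e '' square) := by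
  have : FiniteDimensional ℝ V := e.toLinearEquiv.finiteDimensional
  rw [hullMoment_continuousLinearEquiv_image, ← hullMoment_continuousLinearEquiv_image e.symm]
  exact hullMoment_lt_square hs hp (hK.image_continuousLinearEquiv e.symm)
    (by rwa [ncard_extremePoints_image])

end Descent

section Euclidean

/-- The identification of `ℝ × ℝ` with the Euclidean plane. -/
def euclideanPlane : (ℝ × ℝ) ≃L[ℝ] EuclideanSpace ℝ (Fin 2) :=
  ((EuclideanSpace.equiv (Fin 2) ℝ).trans (.finTwoArrow ℝ ℝ)).symm

lemma euclideanPlane_image_square :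
    euclideanPlane '' square = {x | ∀ i, x i ∈ Icc (-1) 1} := by
  rw [euclideanPlane, ContinuousLinearEquiv.image_symm_eq_preimage]
  ext x
  exact (Fin.forall_fin_two (p := fun i => x i ∈ Icc (-1) 1)).symm

end Euclidean

lemma IsSymPolygon.of_isSymConvexBody {K : Set E} (hK : IsSymConvexBody K) {S : Finset E}
    (hS : K = convexHull ℝ (S : Set E)) : IsSymPolygon K where
  convex := hK.2.1
  isCompact := hK.1
  nonempty_interior := hK.2.2.1
  neg_mem x hx := by rwa [hK.2.2.2, Set.neg_mem_neg]
  finite_extremePoints := S.finite_toSet.subset (hS ▸ extremePoints_convexHull_subset)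

end PolygonMoment

open PolygonMoment

/-- If `K ⊆ ℝ²` is a symmetric convex polygon with more than 4 vertices, then for every
real `p ≥ 1` and integer `N ≥ 2` one has the strict inequalities
`𝔼 U_{K, N+1}^p < 𝔼 U_{𝒫, N+1}^p` and `𝔼 V_{K, N}^p < 𝔼 V_{𝒫, N}^p`, where `𝒫` is any
symmetric parallelogram (the image of `[-1,1]²` under an invertible linear map). -/
theorem momentUV_lt_parallelogram_of_polygon
    (K : Set (EuclideanSpace ℝ (Fin 2))) (hK : IsSymConvexBody K)
    (hpoly : ∃ S : Finset (EuclideanSpace ℝ (Fin 2)), K = convexHull ℝ (S : Set _))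
    (hvert : 4 < (Set.extremePoints ℝ K).ncard)
    (p : ℝ) (hp : 1 ≤ p) (N : ℕ) (hN : 2 ≤ N)
    (L : EuclideanSpace ℝ (Fin 2) ≃ₗ[ℝ] EuclideanSpace ℝ (Fin 2))
    (P : Set (EuclideanSpace ℝ (Fin 2)))
    (hP : P = L '' {x | ∀ i, x i ∈ Set.Icc (-1 : ℝ) 1}) :
    momentU 2 (N + 1) K p < momentU 2 (N + 1) P p ∧
      momentV 2 N K p < momentV 2 N P p := by
  obtain ⟨S, hS⟩ := hpoly
  have hpolygon := IsSymPolygon.of_isSymConvexBody hK hS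
  let e := euclideanPlane.trans L.toContinuousLinearEquiv
  have hPe : P = e '' square := by
    rw [hP, ← euclideanPlane_image_square, ← image_comp]
    rfl
  rw [hPe]
  simp only [momentU_eq_hullMoment, momentV_eq_hullMoment]
  exact ⟨hullMoment_lt_image_square (hasTriangle_points hN) hp hpolygon hvert e,
    hullMoment_lt_image_square (hasTriangle_symmetrized hN) hp hpolygon hvert e⟩
end
end

section
/- For every symmetric convex body K ⊂ ℝ², one has 𝔼 V_{K,2}² ≤ 1/18, with equality when K is a parallelogram. Equivalently, the isotropic constant L_K = (1/2)(2! 𝔼 V_{K,2}²)^{1/4} of any symmetric convex body K ⊂ ℝ² satisfies L_K ≤ L_𝒫 = 12^{-1/2}. -/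
open MeasureTheory Set

noncomputable section

variable {E : Type*} [NormedAddCommGroup E] [InnerProductSpace ℝ E]

/-!
For two points in the plane `𝔼 V²` is `8 * det M / |K|⁴`, where `M` is the matrix of second moments
of `K`, so it is invariant under linear maps. Auerbach's lemma then lets us assume that `K` lies
between the square `[-1, 1]²` and the square `|x| + |y| ≤ 2` circumscribed about it. Let `S` and `T`
be half the areas of `K` beyond the vertical and the horizontal sides of the inner square. The
section lengths of `K` are even and concave, and are compared on `[0, 1]` and on `[1, 2]` with an
extremal profile of the same mass that crosses them once: this bounds `∫ x²` and `∫ y²` by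
polynomials in `S` and `T`. Since `|K| = 2 * (2 + S + T)`, what remains is a polynomial inequality
on `[0, 1]²`.
-/

section Auerbach

variable {ι V : Type*} [NormedAddCommGroup V] [NormedSpace ℝ V]

-- Cramer's rule: replacing `v i` by `x` multiplies `det v` by the `i`-th coordinate of `x`.
theorem abs_repr_le_one_of_forall_abs_det_le [Fintype ι] [DecidableEq ι]
    (b v : Module.Basis ι ℝ V) {K : Set V} (hv : ∀ i, v i ∈ K)
    (hmax : ∀ w : ι → V, (∀ i, w i ∈ K) → |b.det w| ≤ |b.det v|) {x : V} (hx : x ∈ K) (i : ι) :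
    |v.repr x i| ≤ 1 := by
  have mk_eq : Module.Basis.mk v.linearIndependent v.span_eq.ge = v :=
    Module.Basis.eq_of_apply_eq fun j => Module.Basis.mk_apply _ _ j
  have cramer : b.det v * v.repr x i = b.det (Function.update v i x) := by
    have := b.det_smul_mk_coord_eq_det_update v.linearIndependent v.span_eq.ge i
    rw [mk_eq] at this
    exact LinearMap.congr_fun this x
  have hupdate : |b.det (Function.update v i x)| ≤ |b.det v| :=
    hmax _ <| (Function.forall_update_iff v fun _ y => y ∈ K).2 ⟨hx, fun j _ => hv j⟩
  rw [← cramer, abs_mul] at hupdate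
  exact le_of_mul_le_mul_left (by simpa using hupdate) (abs_pos.2 (b.isUnit_det v).ne_zero)

/-- Auerbach's lemma. -/
theorem exists_basis_mem_forall_abs_repr_le_one [Finite ι] (b : Module.Basis ι ℝ V) {K : Set V}
    (hK : IsCompact K) (hspan : Submodule.span ℝ K = ⊤) :
    ∃ v : Module.Basis ι ℝ V, (∀ i, v i ∈ K) ∧ ∀ x ∈ K, ∀ i, |v.repr x i| ≤ 1 := by
  classical
  have := Fintype.ofFinite ι
  have : FiniteDimensional ℝ V := b.finiteDimensional_of_finite
  let u := (Module.Basis.ofSpan hspan.ge).reindex ((Module.Basis.ofSpan hspan.ge).indexEquiv b)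
  have hu : ⇑u ∈ univ.pi fun _ : ι => K := fun i _ =>
    Module.Basis.ofSpan_subset hspan.ge ⟨_, (Module.Basis.reindex_apply _ _ i).symm⟩
  have hcont : Continuous fun w : ι → V => |u.det w| :=
    (Continuous.matrix_det <| continuous_matrix fun i j =>
      (u.coord i).continuous_of_finiteDimensional.comp (continuous_apply j)).abs
  obtain ⟨v, hvK, hmax⟩ :=
    (isCompact_univ_pi fun _ : ι => hK).exists_isMaxOn ⟨u, hu⟩ hcont.continuousOn
  have hdet : IsUnit (u.det v) := by
    have : |u.det u| ≤ |u.det v| := hmax hu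
    rw [u.det_self, abs_one] at this
    exact isUnit_iff_ne_zero.2 (abs_pos.1 (one_pos.trans_le this))
  obtain ⟨hli, hsp⟩ := (Module.Basis.is_basis_iff_det u).2 hdet
  have coe_mk : ⇑(Module.Basis.mk hli hsp.ge) = v := Module.Basis.coe_mk _ _
  refine ⟨.mk hli hsp.ge, fun i => ?_, fun x hx i => ?_⟩
  · simpa [coe_mk] using hvK i (mem_univ i)
  · refine abs_repr_le_one_of_forall_abs_det_le u _ (fun j => ?_) (fun w hw => ?_) hx i
    · simpa [coe_mk] using hvK j (mem_univ j)
    · rw [coe_mk]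
      exact hmax fun j _ => hw j

end Auerbach

section CrossPolytope

open scoped Nat

variable {ι V : Type*} [Fintype ι] [AddCommGroup V] [Module ℝ V]

theorem convex_setOf_sum_abs_le_one : Convex ℝ {p : ι → ℝ | ∑ i, |p i| ≤ 1} := by
  intro p hp q hq a b ha hb hab
  calc ∑ i, |(a • p + b • q) i| ≤ ∑ i, (a * |p i| + b * |q i|) := by
        refine Finset.sum_le_sum fun i _ => (abs_add_le _ _).trans_eq ?_
        simp [abs_mul, abs_of_nonneg ha, abs_of_nonneg hb]
    _ = a * ∑ i, |p i| + b * ∑ i, |q i| := by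
        rw [Finset.sum_add_distrib, Finset.mul_sum, Finset.mul_sum]
    _ ≤ a * 1 + b * 1 := by gcongr <;> assumption
    _ = 1 := by rw [mul_one, mul_one, hab]

theorem sum_smul_mem_of_sum_abs_le_one {C : Set V} (hC : Convex ℝ C) (hneg : ∀ y ∈ C, -y ∈ C)
    (hne : C.Nonempty) {x : ι → V} (hx : ∀ i, x i ∈ C) {p : ι → ℝ} (hp : ∑ i, |p i| ≤ 1) :
    ∑ i, p i • x i ∈ C := by
  have zero_mem : (0 : V) ∈ C := by
    obtain ⟨y, hy⟩ := hne
    simpa using hC.midpoint_mem hy (hneg y hy)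
  have sign_smul_mem (i : ι) : (SignType.sign (p i) : ℝ) • x i ∈ C := by
    rcases lt_trichotomy (p i) 0 with h | h | h <;> simp [h, zero_mem, hx, hneg]
  have abs_smul_sign (i : ι) : |p i| • (SignType.sign (p i) : ℝ) • x i = p i • x i := by
    rw [smul_smul, abs_mul_sign]
  have abs_nonneg' : ∀ i ∈ Finset.univ, 0 ≤ |p i| := fun i _ => abs_nonneg (p i)
  rcases (Finset.sum_nonneg abs_nonneg').eq_or_lt with hs | hs
  · have : ∀ i, p i = 0 := by
      simpa using (Finset.sum_eq_zero_iff_of_nonneg abs_nonneg').1 hs.symm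
    simpa [this] using zero_mem
  · have := hC.smul_mem_of_zero_mem zero_mem
      (hC.centerMass_mem abs_nonneg' hs fun i _ => sign_smul_mem i) ⟨hs.le, hp⟩
    simpa only [Finset.centerMass, abs_smul_sign, smul_smul, mul_inv_cancel₀ hs.ne', one_smul]
      using this

theorem convexHull_range_union_neg_range_eq_image [Nonempty ι] (x : ι → V) :
    convexHull ℝ (range x ∪ -range x) =
      Fintype.linearCombination ℝ x '' {p | ∑ i, |p i| ≤ 1} := by
  classical
  apply Subset.antisymm
  · refine convexHull_min ?_ (convex_setOf_sum_abs_le_one.linear_image _)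
    rintro y (⟨i, rfl⟩ | ⟨i, hi⟩)
    · exact ⟨Pi.single i 1, by simp [Pi.single_apply, apply_ite], by simp⟩
    · exact ⟨Pi.single i (-1), by simp [Pi.single_apply, apply_ite], by simp [hi]⟩
  · rintro _ ⟨p, hp, rfl⟩
    have hx (i : ι) : x i ∈ convexHull ℝ (range x ∪ -range x) :=
      subset_convexHull ℝ _ (.inl ⟨i, rfl⟩)
    refine sum_smul_mem_of_sum_abs_le_one (convex_convexHull ℝ _) (fun y hy => ?_)
      ⟨_, hx (Classical.arbitrary ι)⟩ hx hp
    rwa [← Set.mem_neg, ← convexHull_neg, union_neg, neg_neg, union_comm]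

theorem volume_setOf_sum_abs_le_one [Nonempty ι] :
    volume {p : ι → ℝ | ∑ i, |p i| ≤ 1} =
      ENNReal.ofReal (2 ^ Fintype.card ι / (Fintype.card ι)!) := by
  simpa [Real.Gamma_nat_eq_factorial, one_add_one_eq_two] using volume_sum_rpow_le ι le_rfl 1

theorem volume_convexHull_range_union_neg_range [Nonempty ι] [DecidableEq ι]
    (x : ι → EuclideanSpace ℝ ι) :
    volume (convexHull ℝ (range x ∪ -range x)) =
      ENNReal.ofReal (|(Matrix.of fun i j => x i j).det| *
        (2 ^ Fintype.card ι / (Fintype.card ι)!)) := by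
  have preimage_eq : WithLp.toLp 2 ⁻¹' (Fintype.linearCombination ℝ x '' {p | ∑ i, |p i| ≤ 1}) =
      Matrix.toLin' (Matrix.of fun i j => x i j).transpose '' {p | ∑ i, |p i| ≤ 1} := by
    ext y
    simp only [mem_preimage, mem_image, PiLp.ext_iff, funext_iff]
    simp [Fintype.linearCombination_apply, Matrix.mulVec, dotProduct, mul_comm]
  rw [convexHull_range_union_neg_range_eq_image,
    ← (PiLp.volume_preserving_toLp ι).measure_preimage_equiv
      (f := MeasurableEquiv.toLp 2 (ι → ℝ)), MeasurableEquiv.coe_toLp, preimage_eq,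
    Measure.addHaar_image_linearMap, LinearMap.det_toLin', Matrix.det_transpose,
    volume_setOf_sum_abs_le_one, ENNReal.ofReal_mul (abs_nonneg _)]

end CrossPolytope

section LinearInvariance

variable {ι V : Type*} [NormedAddCommGroup V] [NormedSpace ℝ V] [FiniteDimensional ℝ V]
  [MeasureSpace V] [BorelSpace V] [(volume : Measure V).IsAddHaarMeasure]

theorem volume_real_image_linearEquiv (L : V ≃ₗ[ℝ] V) (K : Set V) :
    volume.real (L '' K) = |LinearMap.det (L : V →ₗ[ℝ] V)| * volume.real K := by
  have := Measure.addHaar_image_linearMap volume (L : V →ₗ[ℝ] V) K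
  simpa [measureReal_def] using congrArg ENNReal.toReal this

theorem setIntegral_forall_mem_image [Fintype ι] (L : V ≃ₗ[ℝ] V) {K : Set V}
    (hK : MeasurableSet K) (G : (ι → V) → ℝ) :
    ∫ x in {x : ι → V | ∀ i, x i ∈ L '' K}, G x =
      |LinearMap.det (L : V →ₗ[ℝ] V)| ^ Fintype.card ι *
        ∫ x in {x : ι → V | ∀ i, x i ∈ K}, G fun i => L (x i) := by
  let Φ : (ι → V) ≃ₗ[ℝ] (ι → V) := LinearEquiv.piCongrRight fun _ => L
  have det_Φ : LinearMap.det (Φ : (ι → V) →ₗ[ℝ] ι → V) =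
      LinearMap.det (L : V →ₗ[ℝ] V) ^ Fintype.card ι :=
    (LinearMap.det_pi fun _ : ι => (L : V →ₗ[ℝ] V)).trans (by simp)
  have image_eq : {x : ι → V | ∀ i, x i ∈ L '' K} = Φ '' {x | ∀ i, x i ∈ K} := by
    ext x
    simp [LinearEquiv.image_eq_preimage_symm, Φ]
  have meas : MeasurableSet {x : ι → V | ∀ i, x i ∈ K} := by
    simpa [Set.pi] using MeasurableSet.univ_pi fun _ : ι => hK
  rw [image_eq]
  refine (integral_image_eq_integral_abs_det_fderiv_smul volume meas
    (fun x _ => (LinearMap.toContinuousLinearMap (Φ : (ι → V) →ₗ[ℝ] ι → V)).hasFDerivWithinAt)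
    Φ.injective.injOn G).trans ?_
  rw [integral_smul, LinearMap.det_toContinuousLinearMap, det_Φ, abs_pow, smul_eq_mul]
  rfl

theorem convexHull_range_union_neg_range_comp {V W : Type*} [AddCommGroup V] [Module ℝ V]
    [AddCommGroup W] [Module ℝ W] (L : V →ₗ[ℝ] W) (x : ι → V) :
    convexHull ℝ (range (fun i => L (x i)) ∪ -range fun i => L (x i)) =
      L '' convexHull ℝ (range x ∪ -range x) := by
  rw [LinearMap.image_convexHull, image_union, Set.image_neg, ← range_comp]
  rfl

theorem momentV_image_linearEquiv {n N : ℕ}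
    (L : EuclideanSpace ℝ (Fin n) ≃ₗ[ℝ] EuclideanSpace ℝ (Fin n))
    {K : Set (EuclideanSpace ℝ (Fin n))} (hK : MeasurableSet K) (p : ℝ) :
    momentV n N (L '' K) p = momentV n N K p := by
  have hull_eq (x : Fin N → EuclideanSpace ℝ (Fin n)) :
      convexHull ℝ (range (fun i => L (x i)) ∪ -range fun i => L (x i)) =
        L '' convexHull ℝ (range x ∪ -range x) :=
    convexHull_range_union_neg_range_comp L.toLinearMap x
  have hdet : |LinearMap.det (L : EuclideanSpace ℝ (Fin n) →ₗ[ℝ] _)| ≠ 0 :=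
    abs_ne_zero.2 L.isUnit_det'.ne_zero
  simp only [momentV, setIntegral_forall_mem_image L hK, hull_eq, ← measureReal_def,
    volume_real_image_linearEquiv, mul_div_mul_left _ _ hdet, mul_pow, Fintype.card_fin,
    mul_div_mul_left _ _ (pow_ne_zero N hdet)]

end LinearInvariance

section SecondMoments

/-- The determinant `∫x² ∫y² - (∫xy)²` of the matrix of second moments of the Lebesgue measure
on a planar set `Q`. The moments are not divided by the area of `Q`. -/
def secondMomentDet (Q : Set (ℝ × ℝ)) : ℝ :=
  (∫ p in Q, p.1 ^ 2) * (∫ p in Q, p.2 ^ 2) - (∫ p in Q, p.1 * p.2) ^ 2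

theorem setIntegral_setIntegral_sq_det {Q : Set (ℝ × ℝ)} (hQ : IsCompact Q) :
    ∫ p in Q, ∫ q in Q, (p.1 * q.2 - p.2 * q.1) ^ 2 = 2 * secondMomentDet Q := by
  have integrable {g : ℝ × ℝ → ℝ} (hg : Continuous g) : IntegrableOn g Q :=
    hg.continuousOn.integrableOn_compact hQ
  have inner_eq (p : ℝ × ℝ) : ∫ q in Q, (p.1 * q.2 - p.2 * q.1) ^ 2 =
      p.1 ^ 2 * (∫ q in Q, q.2 ^ 2) - p.1 * p.2 * (2 * ∫ q in Q, q.1 * q.2)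
        + p.2 ^ 2 * ∫ q in Q, q.1 ^ 2 := by
    have expand (q : ℝ × ℝ) : (p.1 * q.2 - p.2 * q.1) ^ 2 =
        p.1 ^ 2 * q.2 ^ 2 - p.1 * p.2 * (2 * (q.1 * q.2)) + p.2 ^ 2 * q.1 ^ 2 := by ring
    simp only [expand]
    rw [integral_add (integrable (by fun_prop)) (integrable (by fun_prop)),
      integral_sub (integrable (by fun_prop)) (integrable (by fun_prop))]
    simp only [integral_const_mul]
  simp only [inner_eq]
  rw [integral_add (integrable (by fun_prop)) (integrable (by fun_prop)),
    integral_sub (integrable (by fun_prop)) (integrable (by fun_prop))]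
  simp only [integral_mul_const, secondMomentDet]
  ring

/-- Cartesian coordinates on the Euclidean plane. The values are pairs because sections and
iterated integrals are more convenient on `ℝ × ℝ`. -/
def planeCoord : EuclideanSpace ℝ (Fin 2) ≃L[ℝ] ℝ × ℝ :=
  (EuclideanSpace.equiv (Fin 2) ℝ).trans (ContinuousLinearEquiv.finTwoArrow ℝ ℝ)

theorem planeCoord_apply (x : EuclideanSpace ℝ (Fin 2)) : planeCoord x = (x 0, x 1) := rfl

theorem measurePreserving_planeCoord : MeasurePreserving planeCoord :=
  (volume_preserving_finTwoArrow ℝ).comp (PiLp.volume_preserving_ofLp (Fin 2))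

theorem measurableEmbedding_planeCoord : MeasurableEmbedding planeCoord :=
  planeCoord.toHomeomorph.measurableEmbedding

theorem volume_real_preimage_planeCoord (Q : Set (ℝ × ℝ)) :
    volume.real (planeCoord ⁻¹' Q) = volume.real Q := by
  rw [measureReal_def, measurePreserving_planeCoord.measure_preimage_emb
    measurableEmbedding_planeCoord, measureReal_def]

theorem setIntegral_forall_mem_planeCoord_preimage {Q : Set (ℝ × ℝ)} {G : ℝ × ℝ → ℝ × ℝ → ℝ}
    (hG : IntegrableOn (Function.uncurry G) (Q ×ˢ Q)) :
    ∫ x in {x : Fin 2 → EuclideanSpace ℝ (Fin 2) | ∀ i, x i ∈ planeCoord ⁻¹' Q},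
      G (planeCoord (x 0)) (planeCoord (x 1)) = ∫ p in Q, ∫ q in Q, G p q := by
  have coords_preserving := (measurePreserving_planeCoord.prod measurePreserving_planeCoord).comp
    (volume_preserving_finTwoArrow (EuclideanSpace ℝ (Fin 2)))
  have coords_embedding := (measurableEmbedding_planeCoord.prodMap
    measurableEmbedding_planeCoord).comp MeasurableEquiv.finTwoArrow.measurableEmbedding
  have preimage_eq : {x : Fin 2 → EuclideanSpace ℝ (Fin 2) | ∀ i, x i ∈ planeCoord ⁻¹' Q} =
      Prod.map planeCoord planeCoord ∘ MeasurableEquiv.finTwoArrow ⁻¹' (Q ×ˢ Q) := by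
    ext x
    simp [Fin.forall_fin_two]
  rw [preimage_eq]
  exact (coords_preserving.setIntegral_preimage_emb coords_embedding
    (Function.uncurry G) (Q ×ˢ Q)).trans (setIntegral_prod _ hG)

theorem volume_real_convexHull_range_union_neg_range_fin_two
    (x : Fin 2 → EuclideanSpace ℝ (Fin 2)) :
    volume.real (convexHull ℝ (range x ∪ -range x)) = 2 * |x 0 0 * x 1 1 - x 0 1 * x 1 0| := by
  rw [measureReal_def, volume_convexHull_range_union_neg_range,
    ENNReal.toReal_ofReal (by positivity), Matrix.det_fin_two]
  norm_num [Nat.factorial]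
  ring

theorem momentV_planeCoord_preimage {Q : Set (ℝ × ℝ)} (hQ : IsCompact Q) :
    momentV 2 2 (planeCoord ⁻¹' Q) 2 = 8 * secondMomentDet Q / volume.real Q ^ 4 := by
  have integral_sq_det := setIntegral_forall_mem_planeCoord_preimage
    (G := fun p q => (p.1 * q.2 - p.2 * q.1) ^ 2)
    (Continuous.continuousOn (by fun_prop) |>.integrableOn_compact (hQ.prod hQ))
  simp only [planeCoord_apply, setIntegral_setIntegral_sq_det hQ] at integral_sq_det
  simp only [momentV, ← measureReal_def, volume_real_convexHull_range_union_neg_range_fin_two,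
    volume_real_preimage_planeCoord, Real.rpow_two, div_pow, mul_pow, sq_abs, integral_div,
    integral_const_mul, integral_sq_det]
  ring

theorem momentV_image_eq (A : (ℝ × ℝ) ≃ₗ[ℝ] EuclideanSpace ℝ (Fin 2)) {Q : Set (ℝ × ℝ)}
    (hQ : IsCompact Q) :
    momentV 2 2 (A '' Q) 2 = 8 * secondMomentDet Q / volume.real Q ^ 4 := by
  have image_eq : A '' Q = planeCoord.toLinearEquiv.trans A '' (planeCoord ⁻¹' Q) := by
    nth_rw 1 [← planeCoord.surjective.image_preimage Q]
    exact image_image A planeCoord _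
  rw [image_eq, momentV_image_linearEquiv _ (planeCoord.continuous.measurable hQ.measurableSet),
    momentV_planeCoord_preimage hQ]

end SecondMoments

section SectionLength

variable {Q : Set (ℝ × ℝ)}

/-- The length of the vertical section of a planar set `Q` at abscissa `u`. -/
def sectionLength (Q : Set (ℝ × ℝ)) (u : ℝ) : ℝ :=
  volume.real (Prod.mk u ⁻¹' Q)

theorem sectionLength_nonneg (Q : Set (ℝ × ℝ)) (u : ℝ) : 0 ≤ sectionLength Q u :=
  measureReal_nonneg

theorem sectionLength_eq_zero {u : ℝ} (hu : u ∉ Prod.fst '' Q) : sectionLength Q u = 0 := by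
  have : Prod.mk u ⁻¹' Q = ∅ := eq_empty_of_forall_notMem fun v hv => hu ⟨(u, v), hv, rfl⟩
  rw [sectionLength, this, measureReal_empty]

theorem integrable_sectionLength (hQ : IsCompact Q) : Integrable (sectionLength Q) :=
  Measure.integrable_measure_prodMk_left hQ.measurableSet hQ.measure_lt_top.ne

theorem isCompact_preimage_prodMk (hQ : IsCompact Q) (u : ℝ) : IsCompact (Prod.mk u ⁻¹' Q) :=
  (hQ.image continuous_snd).of_isClosed_subset (hQ.isClosed.preimage (by fun_prop))
    fun v hv => ⟨(u, v), hv, rfl⟩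

theorem convex_preimage_prodMk (hQ : Convex ℝ Q) (u : ℝ) : Convex ℝ (Prod.mk u ⁻¹' Q) := by
  intro v hv w hw a b ha hb hab
  simpa [← add_mul, hab] using hQ hv hw ha hb hab

theorem sectionLength_le_two_mul {u r : ℝ} (hr : 0 ≤ r) (h : ∀ v, (u, v) ∈ Q → |v| ≤ r) :
    sectionLength Q u ≤ 2 * r := by
  calc sectionLength Q u ≤ volume.real (Icc (-r) r) :=
        measureReal_mono (fun v hv => abs_le.1 (h v hv)) (by simp)
    _ = 2 * r := by rw [Real.volume_real_Icc_of_le (by linarith)]; ring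

theorem sub_le_sectionLength (hQ : IsCompact Q) (hconv : Convex ℝ Q) {u l r : ℝ}
    (hl : (u, l) ∈ Q) (hr : (u, r) ∈ Q) : r - l ≤ sectionLength Q u := by
  calc r - l ≤ volume.real (Icc l r) := (le_max_left _ 0).trans_eq Real.volume_real_Icc.symm
    _ ≤ sectionLength Q u :=
        measureReal_mono ((convex_preimage_prodMk hconv u).ordConnected.out hl hr)
          (isCompact_preimage_prodMk hQ u).measure_lt_top.ne

theorem exists_sectionLength_le_sub (hQ : IsCompact Q) {u : ℝ} (hu : u ∈ Prod.fst '' Q) :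
    ∃ l r, (u, l) ∈ Q ∧ (u, r) ∈ Q ∧ sectionLength Q u ≤ r - l := by
  have section_nonempty : (Prod.mk u ⁻¹' Q).Nonempty := by
    obtain ⟨p, hp, rfl⟩ := hu
    exact ⟨p.2, hp⟩
  obtain ⟨l, hl⟩ := (isCompact_preimage_prodMk hQ u).exists_isLeast section_nonempty
  obtain ⟨r, hr⟩ := (isCompact_preimage_prodMk hQ u).exists_isGreatest section_nonempty
  refine ⟨l, r, hl.1, hr.1, ?_⟩
  calc sectionLength Q u ≤ volume.real (Icc l r) :=
        measureReal_mono (fun v hv => ⟨hl.2 hv, hr.2 hv⟩) (by simp)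
    _ = r - l := Real.volume_real_Icc_of_le (hl.2 hr.1)

theorem concaveOn_sectionLength (hQ : IsCompact Q) (hconv : Convex ℝ Q) :
    ConcaveOn ℝ (Prod.fst '' Q) (sectionLength Q) := by
  refine ⟨hconv.linear_image (LinearMap.fst ℝ ℝ ℝ), fun u hu v hv a b ha hb hab => ?_⟩
  obtain ⟨l₁, r₁, hl₁, hr₁, hle₁⟩ := exists_sectionLength_le_sub hQ hu
  obtain ⟨l₂, r₂, hl₂, hr₂, hle₂⟩ := exists_sectionLength_le_sub hQ hv
  calc a • sectionLength Q u + b • sectionLength Q v ≤ a • (r₁ - l₁) + b • (r₂ - l₂) := by gcongr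
    _ = (a • r₁ + b • r₂) - (a • l₁ + b • l₂) := by simp only [smul_eq_mul]; ring
    _ ≤ sectionLength Q (a • u + b • v) :=
        sub_le_sectionLength hQ hconv (hconv hl₁ hl₂ ha hb hab) (hconv hr₁ hr₂ ha hb hab)

theorem sectionLength_neg (hneg : ∀ p ∈ Q, -p ∈ Q) (u : ℝ) :
    sectionLength Q (-u) = sectionLength Q u := by
  have : Prod.mk (-u) ⁻¹' Q = -(Prod.mk u ⁻¹' Q) := by
    ext v
    exact ⟨fun hv => by simpa using hneg _ hv, fun hv => by simpa using hneg _ hv⟩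
  rw [sectionLength, this, measureReal_def, Measure.measure_neg, ← measureReal_def, sectionLength]

theorem sectionLength_abs (hneg : ∀ p ∈ Q, -p ∈ Q) (u : ℝ) :
    sectionLength Q |u| = sectionLength Q u := by
  rcases abs_choice u with h | h <;> rw [h]
  exact sectionLength_neg hneg u

theorem setIntegral_comp_fst (hQ : MeasurableSet Q) {F : ℝ → ℝ}
    (hF : IntegrableOn (fun p : ℝ × ℝ => F p.1) Q) :
    ∫ p in Q, F p.1 = ∫ u, F u * sectionLength Q u := by
  rw [← integral_indicator hQ, Measure.volume_eq_prod,
    integral_prod _ ((integrable_indicator_iff hQ).2 hF)]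
  refine integral_congr_ae (.of_forall fun u => ?_)
  have := integral_indicator_const (μ := volume) (F u) (measurable_prodMk_left hQ (x := u))
  rw [smul_eq_mul, mul_comm] at this
  exact this

theorem setIntegral_comp_abs_fst (hQ : MeasurableSet Q) (hneg : ∀ p ∈ Q, -p ∈ Q) {R : ℝ}
    (hR : 0 ≤ R) (hle : ∀ p ∈ Q, |p.1| ≤ R) {F : ℝ → ℝ}
    (hF : IntegrableOn (fun p : ℝ × ℝ => F |p.1|) Q) :
    ∫ p in Q, F |p.1| = 2 * ∫ u in 0..R, F u * sectionLength Q u := by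
  have vanish : ∀ u ∈ Ioi (0 : ℝ) \ Ioc 0 R, F u * sectionLength Q u = 0 := by
    intro u hu
    rw [sectionLength_eq_zero, mul_zero]
    rintro ⟨p, hp, rfl⟩
    exact hu.2 ⟨hu.1, (le_abs_self _).trans (hle p hp)⟩
  calc ∫ p in Q, F |p.1| = ∫ u, F |u| * sectionLength Q |u| := by
        simp only [setIntegral_comp_fst (F := fun u => F |u|) hQ hF, sectionLength_abs hneg]
    _ = 2 * ∫ u in Ioi 0, F u * sectionLength Q u :=
        integral_comp_abs (f := fun u => F u * sectionLength Q u)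
    _ = 2 * ∫ u in 0..R, F u * sectionLength Q u := by
        rw [intervalIntegral.integral_of_le hR,
          setIntegral_eq_of_subset_of_forall_sdiff_eq_zero measurableSet_Ioi Ioc_subset_Ioi_self
            vanish]

theorem volume_real_inter_abs_fst_le (hQ : IsCompact Q) (hneg : ∀ p ∈ Q, -p ∈ Q) {R : ℝ}
    (hR : 0 ≤ R) :
    volume.real (Q ∩ {p | |p.1| ≤ R}) = 2 * ∫ u in 0..R, sectionLength Q u := by
  have strip_compact : IsCompact (Q ∩ {p | |p.1| ≤ R}) :=
    hQ.inter_right (isClosed_le (by fun_prop) continuous_const)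
  have section_eq : EqOn (sectionLength (Q ∩ {p | |p.1| ≤ R})) (sectionLength Q) (uIcc 0 R) := by
    intro u hu
    rw [uIcc_of_le hR] at hu
    simp [sectionLength, preimage_inter, abs_of_nonneg hu.1, hu.2]
  have := setIntegral_comp_abs_fst strip_compact.measurableSet
    (fun p hp => ⟨hneg p hp.1, by simpa using hp.2⟩) hR (fun p hp => hp.2) (F := fun _ => 1)
    (integrableOn_const strip_compact.measure_lt_top.ne)
  simpa [intervalIntegral.integral_congr section_eq] using this

end SectionLength

section Comparison

variable {f g φ : ℝ → ℝ} {a b : ℝ}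

theorem exists_crossing_point (hab : a ≤ b)
    (hcross : ∀ s ∈ Icc a b, ∀ t ∈ Icc a b, s < t → f s < g s → f t ≤ g t) :
    ∃ c ∈ Icc a b, ∀ t ∈ Icc a b, (t < c → g t ≤ f t) ∧ (c < t → f t ≤ g t) := by
  rcases {t ∈ Icc a b | f t < g t}.eq_empty_or_nonempty with hempty | hne
  · refine ⟨b, right_mem_Icc.2 hab, fun t ht => ⟨fun _ => ?_, fun h => absurd ht.2 h.not_ge⟩⟩
    exact not_lt.1 fun h => eq_empty_iff_forall_notMem.1 hempty t ⟨ht, h⟩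
  · have hbdd : BddBelow {t ∈ Icc a b | f t < g t} := ⟨a, fun t ht => ht.1.1⟩
    obtain ⟨s, hs⟩ := hne
    refine ⟨sInf {t ∈ Icc a b | f t < g t},
      ⟨le_csInf ⟨s, hs⟩ fun t ht => ht.1.1, (csInf_le hbdd hs).trans hs.1.2⟩,
      fun t ht => ⟨fun h => ?_, fun h => ?_⟩⟩
    · exact not_lt.1 fun hlt => h.not_ge (csInf_le hbdd ⟨ht, hlt⟩)
    · obtain ⟨r, hr, hrt⟩ := exists_lt_of_csInf_lt ⟨s, hs⟩ h
      exact hcross r hr.1 t ht hrt hr.2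

theorem integral_mul_le_integral_mul_of_crossing (hab : a ≤ b)
    (hf : IntervalIntegrable f volume a b) (hg : IntervalIntegrable g volume a b)
    (hfg : ∫ t in a..b, f t = ∫ t in a..b, g t)
    (hcross : ∀ s ∈ Icc a b, ∀ t ∈ Icc a b, s < t → f s < g s → f t ≤ g t)
    (hφ : ContinuousOn φ (Icc a b)) (hmono : MonotoneOn φ (Icc a b)) :
    ∫ t in a..b, φ t * f t ≤ ∫ t in a..b, φ t * g t := by
  obtain ⟨c, hc, hcc⟩ := exists_crossing_point hab hcross
  rw [← uIcc_of_le hab] at hφ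
  have hφf := hf.continuousOn_mul hφ
  have hφg := hg.continuousOn_mul hφ
  have pointwise : ∀ t ∈ Icc a b, φ t * f t - φ c * f t ≤ φ t * g t - φ c * g t := by
    intro t ht
    rcases lt_trichotomy t c with h | rfl | h
    · nlinarith [(hcc t ht).1 h, hmono ht hc h.le]
    · simp
    · nlinarith [(hcc t ht).2 h, hmono hc ht h.le]
  have := intervalIntegral.integral_mono_on hab (hφf.sub (hf.const_mul (φ c)))
    (hφg.sub (hg.const_mul (φ c))) pointwise
  rw [intervalIntegral.integral_sub hφf (hf.const_mul _),
    intervalIntegral.integral_sub hφg (hg.const_mul _), intervalIntegral.integral_const_mul,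
    intervalIntegral.integral_const_mul, hfg] at this
  linarith

theorem le_of_concaveOn_of_convexOn {s : Set ℝ} (hf : ConcaveOn ℝ s f) (hg : ConvexOn ℝ s g)
    {x y z : ℝ} (hx : x ∈ s) (hz : z ∈ s) (hxy : x ≤ y) (hyz : y ≤ z) (hgf : g x ≤ f x)
    (hlt : f y < g y) : f z ≤ g z := by
  by_contra! hz_lt
  have : min ((f - g) x) ((f - g) z) ≤ (f - g) y :=
    (hf.sub hg).ge_on_segment hx hz (segment_eq_Icc (hxy.trans hyz) ▸ ⟨hxy, hyz⟩)
  simp only [Pi.sub_apply, min_le_iff] at this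
  rcases this with h | h <;> linarith

theorem antitoneOn_of_concaveOn_of_even {s : Set ℝ} (hf : ConcaveOn ℝ s f)
    (hs : ∀ x ∈ s, -x ∈ s) (heven : ∀ x, f (-x) = f x) : AntitoneOn f (s ∩ Ici 0) := by
  intro x hx y hy hxy
  have hneg : -y ≤ x := (neg_nonpos.2 hy.2).trans hx.2
  have : min (f (-y)) (f y) ≤ f x :=
    hf.ge_on_segment (hs y hy.1) hy.1 (segment_eq_Icc (hneg.trans hxy) ▸ ⟨hneg, hxy⟩)
  rwa [heven, min_self] at this

theorem integral_pow_mul_min {r : ℝ} (hr : r ∈ Icc (0 : ℝ) 1) (n : ℕ) :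
    ∫ t in (0 : ℝ)..1, t ^ n * min (4 - 2 * t) (4 - 2 * r) =
      4 / (n + 1) - 2 / (n + 2) - 2 * r ^ (n + 2) / ((n + 1) * (n + 2)) := by
  have left : ∫ t in 0..r, t ^ n * min (4 - 2 * t) (4 - 2 * r) =
      ∫ t in 0..r, t ^ n * (4 - 2 * r) := by
    refine intervalIntegral.integral_congr fun t ht => ?_
    rw [uIcc_of_le hr.1] at ht
    simp only [min_eq_right (show 4 - 2 * r ≤ 4 - 2 * t by linarith [ht.2])]
  have right : ∫ t in r..1, t ^ n * min (4 - 2 * t) (4 - 2 * r) =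
      ∫ t in r..1, (4 * t ^ n - 2 * t ^ (n + 1)) := by
    refine intervalIntegral.integral_congr fun t ht => ?_
    rw [uIcc_of_le hr.2] at ht
    simp only [min_eq_left (show 4 - 2 * t ≤ 4 - 2 * r by linarith [ht.1])]
    ring
  rw [← intervalIntegral.integral_add_adjacent_intervals (b := r)
    (Continuous.intervalIntegrable (by fun_prop) _ _)
    (Continuous.intervalIntegrable (by fun_prop) _ _), left, right,
    intervalIntegral.integral_sub (Continuous.intervalIntegrable (by fun_prop) _ _)
      (Continuous.intervalIntegrable (by fun_prop) _ _)]
  simp only [intervalIntegral.integral_mul_const, intervalIntegral.integral_const_mul,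
    integral_pow, one_pow, zero_pow (Nat.succ_ne_zero _), Nat.cast_add, Nat.cast_one]
  field_simp
  ring

theorem integral_pow_mul_max {S : ℝ} (hS : 0 < S) (hS1 : S ≤ 1) (n : ℕ) :
    ∫ t in (0 : ℝ)..1, t ^ n * max (2 - 2 * t / S) 0 = 2 * S ^ (n + 1) / ((n + 1) * (n + 2)) := by
  have left : ∫ t in 0..S, t ^ n * max (2 - 2 * t / S) 0 =
      ∫ t in 0..S, (2 * t ^ n - 2 / S * t ^ (n + 1)) := by
    refine intervalIntegral.integral_congr fun t ht => ?_
    rw [uIcc_of_le hS.le] at ht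
    have : 0 ≤ 2 - 2 * t / S := sub_nonneg.2 ((div_le_iff₀ hS).2 (by linarith [ht.2]))
    simp only [max_eq_left this]
    ring
  have right : ∫ t in S..1, t ^ n * max (2 - 2 * t / S) 0 = ∫ _ in S..1, (0 : ℝ) := by
    refine intervalIntegral.integral_congr fun t ht => ?_
    rw [uIcc_of_le hS1] at ht
    have : 2 - 2 * t / S ≤ 0 := sub_nonpos.2 ((le_div_iff₀ hS).2 (by linarith [ht.1]))
    simp only [max_eq_right this, mul_zero]
  rw [← intervalIntegral.integral_add_adjacent_intervals (b := S)
    (Continuous.intervalIntegrable (by fun_prop) _ _)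
    (Continuous.intervalIntegrable (by fun_prop) _ _), left, right,
    intervalIntegral.integral_sub (Continuous.intervalIntegrable (by fun_prop) _ _)
      (Continuous.intervalIntegrable (by fun_prop) _ _)]
  simp only [intervalIntegral.integral_const_mul, intervalIntegral.integral_zero, integral_pow,
    zero_pow (Nat.succ_ne_zero _), Nat.cast_add, Nat.cast_one]
  field_simp
  ring

-- The extremal profile of mass `2 + T` is `min (4 - 2 * t) (4 - 2 * r)` with `r ^ 2 = 1 - T`.
theorem integral_sq_mul_le_of_antitoneOn {T : ℝ} (hT : 0 ≤ T) (hT1 : T ≤ 1)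
    (hf : IntervalIntegrable f volume 0 1) (hanti : AntitoneOn f (Icc 0 1))
    (hle : ∀ t ∈ Icc (0 : ℝ) 1, f t ≤ 4 - 2 * t) (hfT : ∫ t in 0..1, f t = 2 + T) :
    ∫ t in 0..1, t ^ 2 * f t ≤ 2 / 3 + (2 * T - T ^ 2) / 6 := by
  obtain ⟨r, hr, hrT⟩ : ∃ r ∈ Icc (0 : ℝ) 1, r ^ 2 = 1 - T :=
    ⟨√(1 - T), ⟨Real.sqrt_nonneg _, Real.sqrt_le_one.2 (by linarith)⟩, Real.sq_sqrt (by linarith)⟩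
  have mass : ∫ t in (0 : ℝ)..1, min (4 - 2 * t) (4 - 2 * r) = 2 + T := by
    have := integral_pow_mul_min hr 0
    norm_num [hrT] at this
    linarith
  have second_moment : ∫ t in (0 : ℝ)..1, t ^ 2 * min (4 - 2 * t) (4 - 2 * r) =
      2 / 3 + (2 * T - T ^ 2) / 6 := by
    rw [integral_pow_mul_min hr 2, show r ^ (2 + 2) = (1 - T) ^ 2 by rw [← hrT]; ring]
    norm_num
    ring
  rw [← second_moment]
  refine integral_mul_le_integral_mul_of_crossing zero_le_one hf
    (Continuous.intervalIntegrable (by fun_prop) _ _) (hfT.trans mass.symm)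
    (fun s hs t ht hst hlt => ?_) (by fun_prop)
    fun s hs t _ hst => pow_le_pow_left₀ hs.1 hst 2
  exact le_min (hle t ht) ((hanti hs ht hst.le).trans (hlt.le.trans (min_le_right _ _)))

theorem integral_sq_mul_max {S : ℝ} (hS : 0 < S) (hS1 : S ≤ 1) :
    ∫ t in (1 : ℝ)..2, t ^ 2 * max (2 - 2 * (t - 1) / S) 0 =
      S + 2 * S ^ 2 / 3 + S ^ 3 / 6 := by
  have shift := intervalIntegral.integral_comp_sub_right
    (a := 1) (b := 2) (fun t => (t + 1) ^ 2 * max (2 - 2 * t / S) 0) 1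
  have expand (t : ℝ) : (t + 1) ^ 2 * max (2 - 2 * t / S) 0 = t ^ 2 * max (2 - 2 * t / S) 0 +
      2 * (t ^ 1 * max (2 - 2 * t / S) 0) + t ^ 0 * max (2 - 2 * t / S) 0 := by ring
  norm_num only [sub_add_cancel] at shift
  rw [shift]
  simp only [expand]
  rw [intervalIntegral.integral_add (Continuous.intervalIntegrable (by fun_prop) _ _)
      (Continuous.intervalIntegrable (by fun_prop) _ _),
    intervalIntegral.integral_add (Continuous.intervalIntegrable (by fun_prop) _ _)
      (Continuous.intervalIntegrable (by fun_prop) _ _), intervalIntegral.integral_const_mul]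
  simp only [integral_pow_mul_max hS hS1]
  norm_num
  ring

-- The extremal profile of mass `S` is linear from the value `2` at `1` to the value `0` at `1 + S`.
theorem integral_sq_mul_le_of_concaveOn {s : Set ℝ} {S : ℝ} (hS1 : S ≤ 1)
    (hf : IntervalIntegrable f volume 1 2) (hf0 : ∀ t, 0 ≤ f t) (hconc : ConcaveOn ℝ s f)
    (hoff : ∀ t ∉ s, f t = 0) (h1s : 1 ∈ s) (hf1 : 2 ≤ f 1) (hfS : ∫ t in 1..2, f t = S) :
    ∫ t in 1..2, t ^ 2 * f t ≤ S + 2 * S ^ 2 / 3 + S ^ 3 / 6 := by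
  have hS0 : 0 ≤ S := hfS ▸ intervalIntegral.integral_nonneg one_le_two fun t _ => hf0 t
  rcases hS0.eq_or_lt with rfl | hS
  · calc ∫ t in 1..2, t ^ 2 * f t ≤ ∫ t in 1..2, 4 * f t := by
          refine intervalIntegral.integral_mono_on one_le_two
            (hf.continuousOn_mul (by fun_prop)) (hf.const_mul _) fun t ht => ?_
          exact mul_le_mul_of_nonneg_right (by nlinarith [ht.1, ht.2]) (hf0 t)
      _ = 0 + 2 * 0 ^ 2 / 3 + 0 ^ 3 / 6 := by
          rw [intervalIntegral.integral_const_mul, hfS]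
          norm_num
  have mass : ∫ t in (1 : ℝ)..2, max (2 - 2 * (t - 1) / S) 0 = S := by
    rw [intervalIntegral.integral_comp_sub_right (fun t => max (2 - 2 * t / S) 0) 1]
    have := integral_pow_mul_max hS hS1 0
    norm_num at this ⊢
    exact this
  have profile_convex : ConvexOn ℝ s fun t => 2 - 2 * (t - 1) / S := by
    refine ⟨hconc.1, fun x _ y _ c d _ _ hcd => le_of_eq ?_⟩
    simp only [smul_eq_mul]
    linear_combination (-2 - 2 / S) * hcd
  rw [← integral_sq_mul_max hS hS1]
  refine integral_mul_le_integral_mul_of_crossing one_le_two hf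
    (Continuous.intervalIntegrable (by fun_prop) _ _) (hfS.trans mass.symm)
    (fun x hx y _ hxy hlt => ?_) (by fun_prop)
    fun x hx y _ hxy => pow_le_pow_left₀ (zero_le_one.trans hx.1) hxy 2
  by_cases hy : y ∈ s
  · refine le_max_of_le_left (le_of_concaveOn_of_convexOn hconc profile_convex h1s hy hx.1 hxy.le
      (by simpa using hf1) ?_)
    exact (lt_max_iff.1 hlt).resolve_right (hf0 x).not_gt
  · exact (hoff y hy).trans_le (le_max_right _ _)

end Comparison

section SquarePosition

theorem volume_real_square : volume.real (Icc (-1 : ℝ) 1 ×ˢ Icc (-1 : ℝ) 1) = 4 := by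
  rw [Measure.volume_eq_prod, measureReal_prod_prod, Real.volume_real_Icc_of_le (by norm_num)]
  norm_num

/-- A compact convex centrally symmetric planar set that contains the square `[-1, 1]²` and lies in
the square `|x| + |y| ≤ 2` circumscribed about it. -/
structure InSquarePosition (Q : Set (ℝ × ℝ)) : Prop where
  isCompact : IsCompact Q
  convex : Convex ℝ Q
  neg_mem : ∀ p ∈ Q, -p ∈ Q
  square_subset : Icc (-1) 1 ×ˢ Icc (-1) 1 ⊆ Q
  abs_add_abs_le : ∀ p ∈ Q, |p.1| + |p.2| ≤ 2

/-- Half the area of the part of `Q` outside the strip `|x| ≤ 1`, for `Q` in square position. -/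
def overhang (Q : Set (ℝ × ℝ)) : ℝ :=
  ∫ u in 1..2, sectionLength Q u

theorem overhang_nonneg (Q : Set (ℝ × ℝ)) : 0 ≤ overhang Q :=
  intervalIntegral.integral_nonneg one_le_two fun u _ => sectionLength_nonneg Q u

theorem measurePreserving_swap_plane : MeasurePreserving (Prod.swap : ℝ × ℝ → ℝ × ℝ) :=
  Measure.measurePreserving_swap

-- With `m = S + T` and `P = S * T`, the difference of the two sides is
-- `P * (8 + 4 * m + m ^ 2 - 13 * P - 3 * P * m - P ^ 2)` plus a multiple of `(S - T) ^ 2`; the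
-- bracket is nonnegative by `m ^ 2 ≥ 4 * P` and `m ≥ 2 * P`.
theorem overhang_polynomial_le {S T : ℝ} (hS : 0 ≤ S) (hS1 : S ≤ 1) (hT : 0 ≤ T) (hT1 : T ≤ 1) :
    (4 + 2 * T - T ^ 2 + 6 * S + 4 * S ^ 2 + S ^ 3) *
      (4 + 2 * S - S ^ 2 + 6 * T + 4 * T ^ 2 + T ^ 3) ≤ (2 + S + T) ^ 4 := by
  have hP : 0 ≤ S * T := mul_nonneg hS hT
  have hP1 : S * T ≤ 1 := mul_le_one₀ hS1 hT hT1
  have hm : 2 * (S * T) ≤ S + T := by nlinarith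
  have bracket_nonneg : 0 ≤ 8 + 4 * (S + T) + (S + T) ^ 2 - 13 * (S * T)
      - 3 * (S * T) * (S + T) - (S * T) ^ 2 := by
    nlinarith [sq_nonneg (S - T), mul_nonneg (sub_nonneg.2 hP1) (sub_nonneg.2 hm),
      mul_nonneg (sub_nonneg.2 hP1) hP]
  have diagonal_nonneg : 0 ≤ 2 * (S + T) + 3 * (S ^ 2 + S * T + T ^ 2)
      + (S + T) * (S ^ 2 + S * T + T ^ 2) := by positivity
  linear_combination mul_nonneg hP bracket_nonneg +
    mul_nonneg (sq_nonneg (S - T)) diagonal_nonneg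

namespace InSquarePosition

variable {Q : Set (ℝ × ℝ)} (hQ : InSquarePosition Q)

include hQ

theorem preimage_swap : InSquarePosition (Prod.swap ⁻¹' Q) where
  isCompact := image_swap_eq_preimage_swap ▸ hQ.isCompact.image continuous_swap
  convex := hQ.convex.linear_preimage (LinearEquiv.prodComm ℝ ℝ ℝ).toLinearMap
  neg_mem p hp := hQ.neg_mem p.swap hp
  square_subset _ hp := hQ.square_subset hp.symm
  abs_add_abs_le p hp := (add_comm _ _).trans_le (hQ.abs_add_abs_le p.swap hp)

theorem abs_fst_le_two {p : ℝ × ℝ} (hp : p ∈ Q) : |p.1| ≤ 2 := by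
  linarith [hQ.abs_add_abs_le p hp, abs_nonneg p.2]

theorem mem_image_fst {u : ℝ} (hu : u ∈ Icc (-1 : ℝ) 1) : u ∈ Prod.fst '' Q :=
  ⟨(u, 0), hQ.square_subset ⟨hu, by norm_num⟩, rfl⟩

theorem sectionLength_le {u : ℝ} (hu : u ≤ 2) : sectionLength Q u ≤ 4 - 2 * u := by
  calc sectionLength Q u ≤ 2 * (2 - u) :=
        sectionLength_le_two_mul (by linarith) fun v hv => by
          linarith [hQ.abs_add_abs_le _ hv, le_abs_self u]
    _ = 4 - 2 * u := by ring

theorem two_le_sectionLength {u : ℝ} (hu : u ∈ Icc (-1 : ℝ) 1) : 2 ≤ sectionLength Q u := by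
  have := sub_le_sectionLength hQ.isCompact hQ.convex (u := u) (l := -1) (r := 1)
    (hQ.square_subset ⟨hu, by norm_num⟩) (hQ.square_subset ⟨hu, by norm_num⟩)
  linarith

theorem antitoneOn_sectionLength : AntitoneOn (sectionLength Q) (Icc 0 1) := by
  refine (antitoneOn_of_concaveOn_of_even (concaveOn_sectionLength hQ.isCompact hQ.convex)
    ?_ (sectionLength_neg hQ.neg_mem)).mono fun u hu =>
      ⟨hQ.mem_image_fst ⟨by linarith [hu.1], hu.2⟩, hu.1⟩
  rintro _ ⟨p, hp, rfl⟩
  exact ⟨-p, hQ.neg_mem p hp, rfl⟩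

theorem intervalIntegrable_sectionLength (a b : ℝ) :
    IntervalIntegrable (sectionLength Q) volume a b :=
  (integrable_sectionLength hQ.isCompact).intervalIntegrable

theorem overhang_le_one : overhang Q ≤ 1 := by
  calc overhang Q ≤ ∫ u in (1 : ℝ)..2, (4 - 2 * u) :=
        intervalIntegral.integral_mono_on one_le_two (hQ.intervalIntegrable_sectionLength 1 2)
          (Continuous.intervalIntegrable (by fun_prop) _ _) fun u hu => hQ.sectionLength_le hu.2
    _ = 1 := by
        rw [intervalIntegral.integral_sub (by simp)
            (Continuous.intervalIntegrable (by fun_prop) _ _),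
          intervalIntegral.integral_const_mul, integral_id]
        norm_num

theorem setIntegral_comp_abs_fst_eq_add {F : ℝ → ℝ} (hF : Continuous F) :
    ∫ p in Q, F |p.1| =
      2 * ((∫ u in 0..1, F u * sectionLength Q u) + ∫ u in 1..2, F u * sectionLength Q u) := by
  have integrable (a b : ℝ) : IntervalIntegrable (fun u => F u * sectionLength Q u) volume a b :=
    (hQ.intervalIntegrable_sectionLength a b).continuousOn_mul hF.continuousOn
  rw [setIntegral_comp_abs_fst hQ.isCompact.measurableSet hQ.neg_mem zero_le_two
    (fun p hp => hQ.abs_fst_le_two hp) (Continuous.continuousOn (by fun_prop)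
      |>.integrableOn_compact hQ.isCompact),
    intervalIntegral.integral_add_adjacent_intervals (integrable 0 1) (integrable 1 2)]

theorem volume_real_eq_integral_add_overhang :
    volume.real Q = 2 * ((∫ u in 0..1, sectionLength Q u) + overhang Q) := by
  simpa [overhang] using hQ.setIntegral_comp_abs_fst_eq_add (F := fun _ => 1) continuous_const

theorem volume_real_sdiff_abs_fst_le_one :
    volume.real (Q \ {p | |p.1| ≤ 1}) = 2 * overhang Q := by
  have strip_measurable : MeasurableSet {p : ℝ × ℝ | |p.1| ≤ 1} :=
    measurableSet_le (by fun_prop) measurable_const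
  have := measureReal_inter_add_sdiff (μ := volume) strip_measurable
    hQ.isCompact.measure_lt_top.ne
  rw [volume_real_inter_abs_fst_le hQ.isCompact hQ.neg_mem zero_le_one,
    hQ.volume_real_eq_integral_add_overhang] at this
  linarith

theorem inter_abs_fst_le_one_eq_union :
    Q ∩ {p | |p.1| ≤ 1} = Icc (-1) 1 ×ˢ Icc (-1) 1 ∪ Q \ {p | |p.2| ≤ 1} := by
  ext p
  simp only [mem_inter_iff, mem_union, mem_sdiff, mem_ofPred_eq, mem_prod, mem_Icc, ← abs_le]
  constructor
  · rintro ⟨hp, h₁⟩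
    by_cases h₂ : |p.2| ≤ 1
    · exact .inl ⟨h₁, h₂⟩
    · exact .inr ⟨hp, h₂⟩
  · rintro (⟨h₁, h₂⟩ | ⟨hp, h₂⟩)
    · exact ⟨hQ.square_subset ⟨abs_le.1 h₁, abs_le.1 h₂⟩, h₁⟩
    · exact ⟨hp, by linarith [hQ.abs_add_abs_le p hp, not_le.1 h₂]⟩

theorem volume_real_sdiff_abs_snd_le_one :
    volume.real (Q \ {p | |p.2| ≤ 1}) = 2 * overhang (Prod.swap ⁻¹' Q) := by
  rw [← hQ.preimage_swap.volume_real_sdiff_abs_fst_le_one, measureReal_def, measureReal_def,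
    ← measurePreserving_swap_plane.measure_preimage_emb
      MeasurableEquiv.prodComm.measurableEmbedding]
  rfl

theorem integral_sectionLength_zero_one :
    ∫ u in 0..1, sectionLength Q u = 2 + overhang (Prod.swap ⁻¹' Q) := by
  have tail_disjoint : Disjoint (Icc (-1 : ℝ) 1 ×ˢ Icc (-1 : ℝ) 1) (Q \ {p | |p.2| ≤ 1}) :=
    disjoint_left.2 fun p hp hpQ => hpQ.2 (abs_le.2 hp.2)
  have tail_measurable : MeasurableSet (Q \ {p | |p.2| ≤ 1}) :=
    hQ.isCompact.measurableSet.diff (measurableSet_le (by fun_prop) measurable_const)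
  have := volume_real_inter_abs_fst_le hQ.isCompact hQ.neg_mem zero_le_one
  rw [hQ.inter_abs_fst_le_one_eq_union, measureReal_union tail_disjoint tail_measurable
    (isCompact_Icc.prod isCompact_Icc).measure_lt_top.ne
    (measure_ne_top_of_subset sdiff_subset hQ.isCompact.measure_lt_top.ne), volume_real_square,
    hQ.volume_real_sdiff_abs_snd_le_one] at this
  linarith

theorem volume_real_eq :
    volume.real Q = 2 * (2 + overhang Q + overhang (Prod.swap ⁻¹' Q)) := by
  rw [hQ.volume_real_eq_integral_add_overhang, hQ.integral_sectionLength_zero_one]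
  ring

theorem setIntegral_fst_sq_le {S T : ℝ} (hS : overhang Q = S)
    (hT : overhang (Prod.swap ⁻¹' Q) = T) :
    ∫ p in Q, p.1 ^ 2 ≤ (4 + 2 * T - T ^ 2 + 6 * S + 4 * S ^ 2 + S ^ 3) / 3 := by
  have inner_le : ∫ u in 0..1, u ^ 2 * sectionLength Q u ≤ 2 / 3 + (2 * T - T ^ 2) / 6 :=
    integral_sq_mul_le_of_antitoneOn (hT ▸ overhang_nonneg _)
      (hT ▸ hQ.preimage_swap.overhang_le_one) (hQ.intervalIntegrable_sectionLength 0 1)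
      hQ.antitoneOn_sectionLength (fun u hu => hQ.sectionLength_le (by linarith [hu.2]))
      (hT ▸ hQ.integral_sectionLength_zero_one)
  have outer_le : ∫ u in 1..2, u ^ 2 * sectionLength Q u ≤ S + 2 * S ^ 2 / 3 + S ^ 3 / 6 :=
    integral_sq_mul_le_of_concaveOn (hS ▸ hQ.overhang_le_one)
      (hQ.intervalIntegrable_sectionLength 1 2) (sectionLength_nonneg Q)
      (concaveOn_sectionLength hQ.isCompact hQ.convex) (fun u hu => sectionLength_eq_zero hu)
      (hQ.mem_image_fst (by norm_num)) (hQ.two_le_sectionLength (by norm_num)) hS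
  have split := hQ.setIntegral_comp_abs_fst_eq_add (F := fun u => u ^ 2) (by fun_prop)
  simp only [sq_abs] at split
  linarith

theorem setIntegral_snd_sq_le {S T : ℝ} (hS : overhang Q = S)
    (hT : overhang (Prod.swap ⁻¹' Q) = T) :
    ∫ p in Q, p.2 ^ 2 ≤ (4 + 2 * S - S ^ 2 + 6 * T + 4 * T ^ 2 + T ^ 3) / 3 := by
  have integral_swap : ∫ p in Prod.swap ⁻¹' Q, p.1 ^ 2 = ∫ p in Q, p.2 ^ 2 :=
    measurePreserving_swap_plane.setIntegral_preimage_emb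
      MeasurableEquiv.prodComm.measurableEmbedding (fun p => p.2 ^ 2) Q
  rw [← integral_swap]
  exact hQ.preimage_swap.setIntegral_fst_sq_le hT (by simpa [← preimage_comp] using hS)

theorem secondMomentDet_le : secondMomentDet Q ≤ volume.real Q ^ 4 / 144 := by
  obtain ⟨S, hS⟩ : ∃ S, overhang Q = S := ⟨_, rfl⟩
  obtain ⟨T, hT⟩ : ∃ T, overhang (Prod.swap ⁻¹' Q) = T := ⟨_, rfl⟩
  have hpoly := overhang_polynomial_le (hS ▸ overhang_nonneg Q) (hS ▸ hQ.overhang_le_one)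
    (hT ▸ overhang_nonneg _) (hT ▸ hQ.preimage_swap.overhang_le_one)
  have fst_le := hQ.setIntegral_fst_sq_le hS hT
  calc secondMomentDet Q ≤ (∫ p in Q, p.1 ^ 2) * ∫ p in Q, p.2 ^ 2 :=
        sub_le_self _ (sq_nonneg _)
    _ ≤ (4 + 2 * T - T ^ 2 + 6 * S + 4 * S ^ 2 + S ^ 3) / 3 *
          ((4 + 2 * S - S ^ 2 + 6 * T + 4 * T ^ 2 + T ^ 3) / 3) :=
        mul_le_mul fst_le (hQ.setIntegral_snd_sq_le hS hT)
          (integral_nonneg fun p => sq_nonneg _)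
          ((integral_nonneg fun p => sq_nonneg _).trans fst_le)
    _ ≤ (2 + S + T) ^ 4 / 9 := by linarith
    _ = volume.real Q ^ 4 / 144 := by rw [hQ.volume_real_eq, hS, hT]; ring

theorem momentV_image_le (A : (ℝ × ℝ) ≃ₗ[ℝ] EuclideanSpace ℝ (Fin 2)) :
    momentV 2 2 (A '' Q) 2 ≤ 1 / 18 := by
  have volume_pos : 0 < volume.real Q := by
    rw [hQ.volume_real_eq]
    linarith [overhang_nonneg Q, overhang_nonneg (Prod.swap ⁻¹' Q)]
  rw [momentV_image_eq A hQ.isCompact, div_le_iff₀ (by positivity)]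
  linarith [hQ.secondMomentDet_le]

end InSquarePosition

end SquarePosition

section Normalization

/-- The coordinates of `p` with respect to the diagonal vectors `(1, 1)` and `(1, -1)`.
They turn the cross-polytope of an Auerbach basis into the square `[-1, 1]²`, and its
parallelogram into the square `|x| + |y| ≤ 2`. -/
def diagonalCoord : (ℝ × ℝ) ≃ₗ[ℝ] (Fin 2 → ℝ) where
  toFun p := ![(p.1 + p.2) / 2, (p.1 - p.2) / 2]
  invFun c := (c 0 + c 1, c 0 - c 1)
  map_add' p q := by ext i; fin_cases i <;> simp <;> ring
  map_smul' c p := by ext i; fin_cases i <;> simp <;> ring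
  left_inv p := by ext <;> simp <;> ring
  right_inv c := by ext i; fin_cases i <;> simp

theorem abs_add_abs_le_iff {a b c : ℝ} : |a| + |b| ≤ c ↔ |a + b| ≤ c ∧ |a - b| ≤ c := by
  refine ⟨fun h => ⟨(abs_add_le a b).trans h, (abs_sub a b).trans h⟩, fun ⟨hadd, hsub⟩ => ?_⟩
  rw [abs_le] at hadd hsub
  rcases abs_choice a with ha | ha <;> rcases abs_choice b with hb | hb <;> rw [ha, hb] <;>
    linarith [hadd.1, hadd.2, hsub.1, hsub.2]

theorem inSquarePosition_preimage {V : Type*} [NormedAddCommGroup V] [NormedSpace ℝ V]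
    {K : Set V} (hK : IsCompact K) (hconv : Convex ℝ K) (hneg : ∀ x ∈ K, -x ∈ K)
    (v : Module.Basis (Fin 2) ℝ V) (hv : ∀ i, v i ∈ K) (hrepr : ∀ x ∈ K, ∀ i, |v.repr x i| ≤ 1) :
    InSquarePosition (diagonalCoord.trans v.equivFun.symm ⁻¹' K) where
  isCompact := by
    have := v.finiteDimensional_of_finite
    let B := (diagonalCoord.trans v.equivFun.symm).toContinuousLinearEquiv
    exact B.toHomeomorph.isCompact_preimage.2 hK
  convex := hconv.linear_preimage (diagonalCoord.trans v.equivFun.symm).toLinearMap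
  neg_mem p hp := by simpa using hneg _ hp
  square_subset := by
    rintro ⟨u, w⟩ ⟨hu, hw⟩
    have sum_le : |(u + w) / 2| + |(u - w) / 2| ≤ 1 := by
      refine abs_add_abs_le_iff.2 ⟨?_, ?_⟩
      · rw [← add_div, add_add_sub_cancel, add_self_div_two]
        exact abs_le.2 hu
      · rw [← sub_div, add_sub_sub_cancel, add_self_div_two]
        exact abs_le.2 hw
    have : ∑ i, |diagonalCoord (u, w) i| ≤ 1 := by
      simpa [diagonalCoord] using sum_le
    simpa [v.equivFun_symm_apply] using
      sum_smul_mem_of_sum_abs_le_one hconv hneg ⟨_, hv 0⟩ hv this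
  abs_add_abs_le := by
    rintro ⟨u, w⟩ hp
    have h₀ : |(u + w) / 2| ≤ 1 := by simpa [diagonalCoord] using hrepr _ hp 0
    have h₁ : |(u - w) / 2| ≤ 1 := by simpa [diagonalCoord] using hrepr _ hp 1
    rw [abs_div, abs_two, div_le_one two_pos] at h₀ h₁
    exact abs_add_abs_le_iff.2 ⟨h₀, h₁⟩

theorem exists_inSquarePosition_image_eq {K : Set (EuclideanSpace ℝ (Fin 2))}
    (hK : IsSymConvexBody K) :
    ∃ (A : (ℝ × ℝ) ≃ₗ[ℝ] EuclideanSpace ℝ (Fin 2)) (Q : Set (ℝ × ℝ)),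
      InSquarePosition Q ∧ A '' Q = K := by
  obtain ⟨hcompact, hconv, hint, hsymm⟩ := hK
  have hspan : Submodule.span ℝ K = ⊤ :=
    Submodule.eq_top_of_nonempty_interior' _ (hint.mono (interior_mono Submodule.subset_span))
  obtain ⟨v, hv, hrepr⟩ := exists_basis_mem_forall_abs_repr_le_one
    (EuclideanSpace.basisFun (Fin 2) ℝ).toBasis hcompact hspan
  have hneg : ∀ x ∈ K, -x ∈ K := fun x hx => Set.mem_neg.1 (hsymm ▸ hx)
  exact ⟨_, _, inSquarePosition_preimage hcompact hconv hneg v hv hrepr,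
    (LinearEquiv.surjective _).image_preimage K⟩

end Normalization

section Parallelogram

theorem setIntegral_square_mul (f g : ℝ → ℝ) :
    ∫ p in Icc (-1 : ℝ) 1 ×ˢ Icc (-1 : ℝ) 1, f p.1 * g p.2 =
      (∫ t in -1..1, f t) * ∫ t in -1..1, g t := by
  rw [Measure.volume_eq_prod, setIntegral_prod_mul, integral_Icc_eq_integral_Ioc,
    integral_Icc_eq_integral_Ioc, intervalIntegral.integral_of_le (by norm_num),
    intervalIntegral.integral_of_le (by norm_num)]

theorem secondMomentDet_square : secondMomentDet (Icc (-1) 1 ×ˢ Icc (-1) 1) = 16 / 9 := by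
  have fst_sq := setIntegral_square_mul (fun t => t ^ 2) fun _ => 1
  have snd_sq := setIntegral_square_mul (fun _ => 1) fun t => t ^ 2
  have cross := setIntegral_square_mul (fun t => t) fun t => t
  simp only [mul_one, one_mul] at fst_sq snd_sq
  rw [secondMomentDet, fst_sq, snd_sq, cross]
  norm_num [integral_pow, integral_id]

theorem image_cube_eq_image_square
    (L : EuclideanSpace ℝ (Fin 2) ≃ₗ[ℝ] EuclideanSpace ℝ (Fin 2)) :
    L '' {x | ∀ i, x i ∈ Icc (-1 : ℝ) 1} =
      planeCoord.symm.toLinearEquiv.trans L '' (Icc (-1) 1 ×ˢ Icc (-1) 1) := by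
  have cube_eq : {x : EuclideanSpace ℝ (Fin 2) | ∀ i, x i ∈ Icc (-1 : ℝ) 1} =
      planeCoord.symm '' (Icc (-1) 1 ×ˢ Icc (-1) 1) := by
    ext x
    simp [-Icc_prod_Icc, ContinuousLinearEquiv.image_symm_eq_preimage, planeCoord_apply,
      Fin.forall_fin_two]
  rw [cube_eq]
  exact image_image L planeCoord.symm _

end Parallelogram

/-- For every symmetric convex body `K ⊆ ℝ²` one has `𝔼 V_{K,2}² ≤ 1/18`, with equality
when `K` is a symmetric parallelogram.  Equivalently, the isotropic constant
`L_K = (1/2)(2! 𝔼 V_{K,2}²)^{1/4}` satisfies `L_K ≤ L_𝒫 = 12^{-1/2}`. -/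
theorem momentV_sq_le_one_div_eighteen
    (K : Set (EuclideanSpace ℝ (Fin 2))) (hK : IsSymConvexBody K) :
    momentV 2 2 K 2 ≤ 1 / 18 ∧
      ∀ (L : EuclideanSpace ℝ (Fin 2) ≃ₗ[ℝ] EuclideanSpace ℝ (Fin 2))
        (P : Set (EuclideanSpace ℝ (Fin 2))),
        P = L '' {x | ∀ i, x i ∈ Set.Icc (-1 : ℝ) 1} → momentV 2 2 P 2 = 1 / 18 := by
  constructor
  · obtain ⟨A, Q, hQ, rfl⟩ := exists_inSquarePosition_image_eq hK
    exact hQ.momentV_image_le A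
  · rintro L P rfl
    rw [image_cube_eq_image_square, momentV_image_eq _ (isCompact_Icc.prod isCompact_Icc),
      secondMomentDet_square, volume_real_square]
    norm_num
end
end
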